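/- Let m be an order function on T*ℝ such that m^{−1} is also an order function. Let a ∈ S(1) and e ∈ S(m), and assume there is c > 0 with e(x,ξ,h) ≥ c·m(x,ξ) on a neighborhood of the support of a. Then for every N ∈ ℕ there exist q ∈ S(m^{−1}) and r ∈ S(1) such that, for every h ∈ (0,1], Op_h(a) = Op_h(e)∘Op_h(q) + h^N·Op_h(r) as operators on the Schwartz space 𝒮(ℝ); similarly there exist q̃ ∈ S(m^{−1}), r̃ ∈ S(1) with Op_h(a) = Op_h(q̃)∘Op_h(e) + h^N·Op_h(r̃). Moreover one may take q = q₀ + h·q₁ with q₀, q₁ ∈ S(m^{−1}) and q₀ = a/e (extended by zero off the support of a). -/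

import Mathlib

open MeasureTheory

noncomputable section

/-- Fourier transform, convention `û ξ = ∫ e^{-iyξ} u y dy`. -/
def FT (u : ℝ → ℂ) (ξ : ℝ) : ℂ := ∫ y : ℝ, Complex.exp (-(Complex.I * y * ξ)) * u y

/-- Semiclassical quantization `Op_h(a)u(x) = (2π)⁻¹ ∫ e^{ixξ} a(x,hξ) û(ξ) dξ`. -/
def Op (h : ℝ) (a : ℝ → ℝ → ℂ) (u : ℝ → ℂ) : ℝ → ℂ := fun x =>
  (2 * Real.pi : ℂ)⁻¹ * ∫ ξ : ℝ, Complex.exp (Complex.I * x * ξ) * a x (h * ξ) * FT u ξ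

/-- Mixed partial derivative `∂_x^α ∂_ξ^β a`. -/
def pd (α β : ℕ) (a : ℝ → ℝ → ℂ) (x ξ : ℝ) : ℂ :=
  iteratedDeriv α (fun x' => iteratedDeriv β (a x') ξ) x

/-- An order function on `T*ℝ`. -/
def IsOrderFunction (m : ℝ → ℝ → ℝ) : Prop :=
  (∀ x ξ : ℝ, 0 < m x ξ) ∧ ContDiff ℝ (⊤ : ℕ∞) (fun q : ℝ × ℝ => m q.1 q.2) ∧
  ∃ C₀ > (0:ℝ), ∃ N₀ : ℕ, ∀ x ξ y η : ℝ,
    m x ξ ≤ C₀ * (1 + |x - y| + |ξ - η|) ^ N₀ * m y η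

/-- The symbol class `S(m)` of `h`-dependent symbols. -/
def SymS (m : ℝ → ℝ → ℝ) (a : ℝ → ℝ → ℝ → ℂ) : Prop :=
  (∀ h ∈ Set.Ioc (0:ℝ) 1, ContDiff ℝ (⊤ : ℕ∞) (fun q : ℝ × ℝ => a h q.1 q.2)) ∧
  ∀ α β : ℕ, ∃ C : ℝ, ∀ h ∈ Set.Ioc (0:ℝ) 1, ∀ x ξ : ℝ, ‖pd α β (a h) x ξ‖ ≤ C * m x ξ

/-!
Formally `Op_h(e) ∘ Op_h(q)` has the symbol `(2π)⁻¹ ∬ e^{-iyσ} e(x, ζ + hσ) q(x + y, ζ) dy dσ`. The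
integral converges absolutely after integrating by parts with `1 + ∂_y` and the weight
`(1 + iσ)⁻ᴷ`, and its derivatives in `h` are integrals of the same form. Taylor's formula in `h`
therefore gives the expansion `∑ (-ih)ᵏ / k! · ∂_ξᵏ e · ∂_xᵏ q`, whose remainder of order `M` is
`h ^ M` times a symbol in the product class.

So, up to that remainder, composition with `e` on either side is multiplication by `e` plus
`h` times an operator which does not enlarge supports. Since `e` is invertible on the support of
`a`, the equation for `q` is solved to any order by starting from `a / e` and repeatedly dividing
the error by `e`.
-/

section

open Filter Topology
open scoped ContDiff

/-! ### Smooth functions on phase space -/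

/-- Joint smoothness of a function of two real variables in curried form. -/
def IsSmooth (a : ℝ → ℝ → ℂ) : Prop := ContDiff ℝ ∞ fun q : ℝ × ℝ => a q.1 q.2

/-- The derivative of `a` in the direction `v`; working with all directions at once treats
`∂_x` and `∂_ξ` on the same footing. -/
def dirDeriv (v : ℝ × ℝ) (a : ℝ → ℝ → ℂ) (x ξ : ℝ) : ℂ :=
  fderiv ℝ (fun q : ℝ × ℝ => a q.1 q.2) (x, ξ) v

local notation "∂₁" => dirDeriv (1, 0)
local notation "∂₂" => dirDeriv (0, 1)

namespace IsSmooth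

variable {a b : ℝ → ℝ → ℂ}

lemma differentiable (ha : IsSmooth a) : Differentiable ℝ fun q : ℝ × ℝ => a q.1 q.2 :=
  ContDiff.differentiable ha (by simp)

lemma hasDerivAt_line (ha : IsSmooth a) (x ξ : ℝ) (v : ℝ × ℝ) (t : ℝ) :
    HasDerivAt (fun t => a (x + t * v.1) (ξ + t * v.2))
      (dirDeriv v a (x + t * v.1) (ξ + t * v.2)) t := by
  have hline : HasDerivAt (fun t : ℝ => (x + t * v.1, ξ + t * v.2)) v t := by
    simpa using (((hasDerivAt_id t).mul_const v.1).const_add x).prodMk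
      (((hasDerivAt_id t).mul_const v.2).const_add ξ)
  exact (ha.differentiable _).hasFDerivAt.comp_hasDerivAt t hline

lemma hasDerivAt_left (ha : IsSmooth a) (x ξ : ℝ) :
    HasDerivAt (fun x' => a x' ξ) (∂₁ a x ξ) x := by
  simpa using ha.hasDerivAt_line 0 ξ (1, 0) x

lemma hasDerivAt_right (ha : IsSmooth a) (x ξ : ℝ) : HasDerivAt (a x) (∂₂ a x ξ) ξ := by
  simpa using ha.hasDerivAt_line x 0 (0, 1) ξ

lemma left (ha : IsSmooth a) (ξ : ℝ) : ContDiff ℝ ∞ fun x => a x ξ :=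
  ContDiff.comp ha (contDiff_id.prodMk contDiff_const)

protected lemma dirDeriv (ha : IsSmooth a) (v : ℝ × ℝ) : IsSmooth (dirDeriv v a) :=
  (ContDiff.fderiv_right (m := ∞) ha (by simp)).clm_apply contDiff_const

lemma iterate_dirDeriv (ha : IsSmooth a) (v : ℝ × ℝ) (n : ℕ) :
    IsSmooth ((dirDeriv v)^[n] a) := by
  induction n generalizing a with
  | zero => exact ha
  | succ _ ih => exact ih (ha.dirDeriv v)

lemma dirDeriv_comm (ha : IsSmooth a) (v w : ℝ × ℝ) :
    dirDeriv v (dirDeriv w a) = dirDeriv w (dirDeriv v a) := by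
  have hdiff : Differentiable ℝ (fderiv ℝ fun q : ℝ × ℝ => a q.1 q.2) :=
    (ContDiff.fderiv_right (m := ∞) ha (by simp)).differentiable (by simp)
  have hsecond (v w : ℝ × ℝ) (x ξ : ℝ) : dirDeriv v (dirDeriv w a) x ξ =
      fderiv ℝ (fderiv ℝ fun q : ℝ × ℝ => a q.1 q.2) (x, ξ) v w := by
    simpa [dirDeriv] using congrArg (fun L => L v)
      ((hdiff (x, ξ)).hasFDerivAt.clm_apply (hasFDerivAt_const w (x, ξ))).fderiv
  funext x ξ
  rw [hsecond, hsecond]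
  exact second_derivative_symmetric (fun q => (ha.differentiable q).hasFDerivAt)
    (hdiff (x, ξ)).hasFDerivAt v w

lemma dirDeriv_iterate_comm (ha : IsSmooth a) (v w : ℝ × ℝ) (n : ℕ) :
    dirDeriv v ((dirDeriv w)^[n] a) =
      (dirDeriv w)^[n] (dirDeriv v a) := by
  induction n generalizing a with
  | zero => rfl
  | succ n ih =>
    rw [Function.iterate_succ_apply, ih (ha.dirDeriv w), ha.dirDeriv_comm,
      ← Function.iterate_succ_apply]

lemma iterate_left (ha : IsSmooth a) (n : ℕ) (x ξ : ℝ) :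
    (∂₁)^[n] a x ξ = iteratedDeriv n (fun x' => a x' ξ) x := by
  induction n generalizing a with
  | zero => simp
  | succ n ih =>
    rw [Function.iterate_succ_apply, ih (ha.dirDeriv _), iteratedDeriv_succ']
    congr 1
    exact funext fun y => (ha.hasDerivAt_left y ξ).deriv.symm

lemma iterate_right (ha : IsSmooth a) (n : ℕ) (x ξ : ℝ) :
    (∂₂)^[n] a x ξ = iteratedDeriv n (a x) ξ := by
  induction n generalizing a with
  | zero => simp
  | succ n ih =>
    rw [Function.iterate_succ_apply, ih (ha.dirDeriv _), iteratedDeriv_succ']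
    congr 1
    exact funext fun η => (ha.hasDerivAt_right x η).deriv.symm

lemma pd_eq (ha : IsSmooth a) (α β : ℕ) : pd α β a = (∂₁)^[α] ((∂₂)^[β] a) := by
  funext x ξ
  rw [(ha.iterate_dirDeriv _ β).iterate_left, pd]
  simp_rw [ha.iterate_right]

lemma add (ha : IsSmooth a) (hb : IsSmooth b) : IsSmooth fun x ξ => a x ξ + b x ξ :=
  ContDiff.add ha hb

lemma mul (ha : IsSmooth a) (hb : IsSmooth b) : IsSmooth fun x ξ => a x ξ * b x ξ :=
  ContDiff.mul ha hb

end IsSmooth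

lemma isSmooth_const (c : ℂ) : IsSmooth fun _ _ => c := contDiff_const

section DirDeriv

variable {a b : ℝ → ℝ → ℂ} (v : ℝ × ℝ)

lemma dirDeriv_add (ha : IsSmooth a) (hb : IsSmooth b) :
    dirDeriv v (fun x ξ => a x ξ + b x ξ) = fun x ξ => dirDeriv v a x ξ + dirDeriv v b x ξ := by
  funext x ξ
  exact congrArg (fun L => L v) (fderiv_fun_add (ha.differentiable _) (hb.differentiable _))

lemma dirDeriv_mul (ha : IsSmooth a) (hb : IsSmooth b) :
    dirDeriv v (fun x ξ => a x ξ * b x ξ) =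
      fun x ξ => dirDeriv v a x ξ * b x ξ + a x ξ * dirDeriv v b x ξ := by
  funext x ξ
  refine (congrArg (fun L => L v)
    (fderiv_fun_mul (ha.differentiable (x, ξ)) (hb.differentiable (x, ξ)))).trans ?_
  simp [dirDeriv, mul_comm, add_comm]

lemma dirDeriv_const (c : ℂ) : dirDeriv v (fun _ _ => c) = fun _ _ => 0 := by
  funext x ξ
  simp [dirDeriv]

lemma dirDeriv_eq (a : ℝ → ℝ → ℂ) :
    dirDeriv v a = fun x ξ => v.1 * ∂₁ a x ξ + v.2 * ∂₂ a x ξ := by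
  funext x ξ
  have hv : v = v.1 • ((1, 0) : ℝ × ℝ) + v.2 • ((0, 1) : ℝ × ℝ) := by simp
  simp only [dirDeriv]
  conv_lhs => rw [hv]
  rw [map_add, map_smul, map_smul]
  simp

end DirDeriv

/-! ### Families of symbols -/

section Symbols

variable {ι : Type*} {m m₁ m₂ : ℝ → ℝ → ℝ} {a b : ι → ℝ → ℝ → ℂ}

/-- A family of functions on phase space is bounded by a multiple of `m`, uniformly in the
index. -/
def IsBoundedBy (m : ℝ → ℝ → ℝ) (a : ι → ℝ → ℝ → ℂ) : Prop :=
  ∃ C : ℝ, 0 ≤ C ∧ ∀ i x ξ, ‖a i x ξ‖ ≤ C * m x ξ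

/-- All derivatives of order at most `n` are bounded by `m`, uniformly in the index. -/
def IsSymbolUpTo (m : ℝ → ℝ → ℝ) : ℕ → (ι → ℝ → ℝ → ℂ) → Prop
  | 0, a => IsBoundedBy m a
  | n + 1, a => IsBoundedBy m a ∧ ∀ v, IsSymbolUpTo m n fun i => dirDeriv v (a i)

/-- Symbols in `S(m)` depending on an abstract index, with uniform symbol estimates; for the
index set `(0,1]` this is `SymS` (see `symS_iff_isSymbol`). -/
def IsSymbol (m : ℝ → ℝ → ℝ) (a : ι → ℝ → ℝ → ℂ) : Prop :=
  (∀ i, IsSmooth (a i)) ∧ ∀ n, IsSymbolUpTo m n a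

namespace IsBoundedBy

lemma add (ha : IsBoundedBy m a) (hb : IsBoundedBy m b) :
    IsBoundedBy m fun i x ξ => a i x ξ + b i x ξ := by
  obtain ⟨C, hC, ha⟩ := ha
  obtain ⟨D, hD, hb⟩ := hb
  refine ⟨C + D, by positivity, fun i x ξ => (norm_add_le _ _).trans ?_⟩
  rw [add_mul]
  exact add_le_add (ha i x ξ) (hb i x ξ)

lemma mul (ha : IsBoundedBy m₁ a) (hb : IsBoundedBy m₂ b) :
    IsBoundedBy (fun x ξ => m₁ x ξ * m₂ x ξ) fun i x ξ => a i x ξ * b i x ξ := by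
  obtain ⟨C, hC, ha⟩ := ha
  obtain ⟨D, hD, hb⟩ := hb
  refine ⟨C * D, by positivity, fun i x ξ => ?_⟩
  rw [norm_mul, mul_mul_mul_comm]
  exact mul_le_mul (ha i x ξ) (hb i x ξ) (norm_nonneg _) ((norm_nonneg _).trans (ha i x ξ))

lemma const_mul {c : ι → ℂ} {C : ℝ} (ha : IsBoundedBy m a) (hc : ∀ i, ‖c i‖ ≤ C) :
    IsBoundedBy m fun i x ξ => c i * a i x ξ := by
  have hconst : IsBoundedBy (fun _ _ => 1) fun i _ _ => c i :=
    ⟨max C 0, le_max_right _ _, fun i _ _ => by simp [hc i]⟩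
  simpa using hconst.mul ha

end IsBoundedBy

namespace IsSymbolUpTo

variable {n : ℕ}

lemma isBoundedBy (ha : IsSymbolUpTo m n a) : IsBoundedBy m a := by
  cases n with
  | zero => exact ha
  | succ n => exact ha.1

lemma of_succ (ha : IsSymbolUpTo m (n + 1) a) : IsSymbolUpTo m n a := by
  induction n generalizing a with
  | zero => exact ha.1
  | succ n ih => exact ⟨ha.1, fun v => ih (ha.2 v)⟩

lemma add (hsa : ∀ i, IsSmooth (a i)) (hsb : ∀ i, IsSmooth (b i)) (ha : IsSymbolUpTo m n a)
    (hb : IsSymbolUpTo m n b) : IsSymbolUpTo m n fun i x ξ => a i x ξ + b i x ξ := by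
  induction n generalizing a b with
  | zero => exact IsBoundedBy.add ha hb
  | succ n ih =>
    refine ⟨ha.1.add hb.1, fun v => ?_⟩
    simp_rw [fun i => dirDeriv_add v (hsa i) (hsb i)]
    exact ih (fun i => (hsa i).dirDeriv v) (fun i => (hsb i).dirDeriv v) (ha.2 v) (hb.2 v)

lemma mul (hsa : ∀ i, IsSmooth (a i)) (hsb : ∀ i, IsSmooth (b i)) (ha : IsSymbolUpTo m₁ n a)
    (hb : IsSymbolUpTo m₂ n b) :
    IsSymbolUpTo (fun x ξ => m₁ x ξ * m₂ x ξ) n fun i x ξ => a i x ξ * b i x ξ := by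
  induction n generalizing a b with
  | zero => exact IsBoundedBy.mul ha hb
  | succ n ih =>
    refine ⟨ha.1.mul hb.1, fun v => ?_⟩
    simp_rw [fun i => dirDeriv_mul v (hsa i) (hsb i)]
    have hsa' i := (hsa i).dirDeriv v
    have hsb' i := (hsb i).dirDeriv v
    exact add (fun i => (hsa' i).mul (hsb i)) (fun i => (hsa i).mul (hsb' i))
      (ih hsa' hsb (ha.2 v) hb.of_succ) (ih hsa hsb' ha.of_succ (hb.2 v))

lemma const_mul {c : ι → ℂ} {C : ℝ} (hsa : ∀ i, IsSmooth (a i)) (ha : IsSymbolUpTo m n a)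
    (hc : ∀ i, ‖c i‖ ≤ C) : IsSymbolUpTo m n fun i x ξ => c i * a i x ξ := by
  induction n generalizing a with
  | zero => exact IsBoundedBy.const_mul ha hc
  | succ n ih =>
    refine ⟨ha.1.const_mul hc, fun v => ?_⟩
    simp_rw [fun i => dirDeriv_mul v (isSmooth_const (c i)) (hsa i), dirDeriv_const, zero_mul,
      zero_add]
    exact ih (fun i => (hsa i).dirDeriv v) (ha.2 v)

lemma reindex {κ : Type*} (ha : IsSymbolUpTo m n a) (p : κ → ι) :
    IsSymbolUpTo m n fun k => a (p k) := by
  have hbdd {a : ι → ℝ → ℝ → ℂ} : IsBoundedBy m a → IsBoundedBy m fun k => a (p k) :=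
    fun ⟨C, hC, h⟩ => ⟨C, hC, fun k => h (p k)⟩
  induction n generalizing a with
  | zero => exact hbdd ha
  | succ n ih => exact ⟨hbdd ha.1, fun v => ih (ha.2 v)⟩

end IsSymbolUpTo

namespace IsSymbol

lemma isBoundedBy (ha : IsSymbol m a) : IsBoundedBy m a := ha.2 0

protected lemma dirDeriv (ha : IsSymbol m a) (v : ℝ × ℝ) : IsSymbol m fun i => dirDeriv v (a i) :=
  ⟨fun i => (ha.1 i).dirDeriv v, fun n => (ha.2 (n + 1)).2 v⟩

lemma iterate_dirDeriv (ha : IsSymbol m a) (v : ℝ × ℝ) (n : ℕ) :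
    IsSymbol m fun i => (dirDeriv v)^[n] (a i) := by
  induction n generalizing a with
  | zero => exact ha
  | succ _ ih => exact ih (ha.dirDeriv v)

lemma add (ha : IsSymbol m a) (hb : IsSymbol m b) : IsSymbol m fun i x ξ => a i x ξ + b i x ξ :=
  ⟨fun i => (ha.1 i).add (hb.1 i), fun n => (ha.2 n).add ha.1 hb.1 (hb.2 n)⟩

lemma mul (ha : IsSymbol m₁ a) (hb : IsSymbol m₂ b) :
    IsSymbol (fun x ξ => m₁ x ξ * m₂ x ξ) fun i x ξ => a i x ξ * b i x ξ :=
  ⟨fun i => (ha.1 i).mul (hb.1 i), fun n => (ha.2 n).mul ha.1 hb.1 (hb.2 n)⟩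

lemma const_mul {c : ι → ℂ} {C : ℝ} (ha : IsSymbol m a) (hc : ∀ i, ‖c i‖ ≤ C) :
    IsSymbol m fun i x ξ => c i * a i x ξ :=
  ⟨fun i => (isSmooth_const (c i)).mul (ha.1 i), fun n => (ha.2 n).const_mul ha.1 hc⟩

lemma reindex {κ : Type*} (ha : IsSymbol m a) (p : κ → ι) : IsSymbol m fun k => a (p k) :=
  ⟨fun k => ha.1 (p k), fun n => (ha.2 n).reindex p⟩

lemma zero : IsSymbol m fun (_ : ι) _ _ => (0 : ℂ) := by
  refine ⟨fun _ => isSmooth_const 0, fun n => ?_⟩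
  have hbdd : IsBoundedBy m fun (_ : ι) _ _ => (0 : ℂ) := ⟨0, le_rfl, by simp⟩
  induction n with
  | zero => exact hbdd
  | succ n ih => exact ⟨hbdd, fun v => by simpa only [dirDeriv_const] using ih⟩

lemma sum {J : Type*} (s : Finset J) {f : J → ι → ℝ → ℝ → ℂ}
    (hf : ∀ j ∈ s, IsSymbol m (f j)) : IsSymbol m fun i x ξ => ∑ j ∈ s, f j i x ξ := by
  classical
  induction s using Finset.induction_on with
  | empty => simpa using zero
  | insert j s hj ih =>
    simp_rw [Finset.sum_insert hj]
    exact (hf j (s.mem_insert_self j)).add (ih fun k hk => hf k (Finset.mem_insert_of_mem hk))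

lemma of_partials (hs : ∀ i, IsSmooth (a i))
    (hbdd : ∀ α β : ℕ, IsBoundedBy m fun i => (∂₁)^[α] ((∂₂)^[β] (a i))) : IsSymbol m a := by
  refine ⟨hs, fun n => ?_⟩
  induction n generalizing a with
  | zero => exact hbdd 0 0
  | succ n ih =>
    have hs₁ i := (hs i).dirDeriv (1, 0)
    have hs₂ i := (hs i).dirDeriv (0, 1)
    have h₁ : IsSymbolUpTo m n fun i => ∂₁ (a i) := ih hs₁ fun α β => by
      simpa only [Function.iterate_succ_apply, fun i => (hs i).dirDeriv_iterate_comm (1, 0) (0, 1)]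
        using hbdd (α + 1) β
    have h₂ : IsSymbolUpTo m n fun i => ∂₂ (a i) := ih hs₂ fun α β => hbdd α (β + 1)
    refine ⟨hbdd 0 0, fun v => ?_⟩
    simp_rw [dirDeriv_eq v]
    exact (h₁.const_mul (c := fun _ => (v.1 : ℂ)) hs₁ fun _ => le_rfl).add
      (fun i => (isSmooth_const _).mul (hs₁ i)) (fun i => (isSmooth_const _).mul (hs₂ i))
      (h₂.const_mul (c := fun _ => (v.2 : ℂ)) hs₂ fun _ => le_rfl)

lemma isBoundedBy_partials (ha : IsSymbol m a) (α β : ℕ) :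
    IsBoundedBy m fun i => (∂₁)^[α] ((∂₂)^[β] (a i)) :=
  ((ha.iterate_dirDeriv _ β).iterate_dirDeriv _ α).isBoundedBy

end IsSymbol

lemma symS_iff_isSymbol (hm : ∀ x ξ, 0 ≤ m x ξ) {a : ℝ → ℝ → ℝ → ℂ} :
    SymS m a ↔ IsSymbol m fun (h : Set.Ioc (0 : ℝ) 1) => a h := by
  constructor
  · rintro ⟨hs, hbdd⟩
    refine .of_partials (fun h => hs h h.2) fun α β => ?_
    obtain ⟨C, hC⟩ := hbdd α β
    refine ⟨max C 0, le_max_right _ _, fun h x ξ => ?_⟩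
    simp_rw [← fun h : Set.Ioc (0 : ℝ) 1 => IsSmooth.pd_eq (hs h h.2)]
    exact (hC h h.2 x ξ).trans (mul_le_mul_of_nonneg_right (le_max_left _ _) (hm x ξ))
  · intro ha
    refine ⟨fun h hh => ha.1 ⟨h, hh⟩, fun α β => ?_⟩
    obtain ⟨C, -, hC⟩ := ha.isBoundedBy_partials α β
    refine ⟨C, fun h hh x ξ => ?_⟩
    rw [(ha.1 ⟨h, hh⟩).pd_eq]
    exact hC ⟨h, hh⟩ x ξ

end Symbols

/-! ### Polynomial growth -/

section Growth

variable {κ : Type*} {N N' : ℤ} {w w' : κ → ℝ} {F G : κ → ℝ → ℂ}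

/-- Every derivative of `F i` is `O(w i * (1 + |y|) ^ N)`, uniformly in `i`. -/
def UniformGrowth (N : ℤ) (w : κ → ℝ) (F : κ → ℝ → ℂ) : Prop :=
  (∀ i, ContDiff ℝ ∞ (F i)) ∧
    ∀ k, ∃ C : ℝ, 0 ≤ C ∧ ∀ i y, ‖iteratedDeriv k (F i) y‖ ≤ C * w i * (1 + |y|) ^ N

/-- Every derivative of the single function `F` is `O((1 + |y|) ^ N)`. -/
abbrev HasGrowth (N : ℤ) (F : ℝ → ℂ) : Prop := UniformGrowth N (fun _ : Unit => 1) fun _ => F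

lemma one_le_one_add_abs (y : ℝ) : 1 ≤ 1 + |y| := le_add_of_nonneg_right (abs_nonneg y)

lemma nonneg_of_norm_le_mul {z : ℂ} {c t : ℝ} (h : ‖z‖ ≤ c * t) (ht : 0 < t) : 0 ≤ c :=
  nonneg_of_mul_nonneg_left ((norm_nonneg z).trans h) ht

lemma contDiffAt_of_contDiff_infty {f : ℝ → ℂ} (hf : ContDiff ℝ ∞ f) (k : ℕ) (y : ℝ) :
    ContDiffAt ℝ k f y :=
  (hf.of_le (by exact_mod_cast le_top)).contDiffAt

namespace UniformGrowth

lemma contDiff (hF : UniformGrowth N w F) (i : κ) : ContDiff ℝ ∞ (F i) := hF.1 i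

lemma continuous (hF : UniformGrowth N w F) (i : κ) : Continuous (F i) := (hF.contDiff i).continuous

lemma hasDerivAt (hF : UniformGrowth N w F) (i : κ) (y : ℝ) :
    HasDerivAt (F i) (deriv (F i) y) y :=
  ((hF.contDiff i).differentiable (by simp) y).hasDerivAt

lemma norm_le (hF : UniformGrowth N w F) :
    ∃ C : ℝ, 0 ≤ C ∧ ∀ i y, ‖F i y‖ ≤ C * w i * (1 + |y|) ^ N := by
  simpa using hF.2 0

protected lemma deriv (hF : UniformGrowth N w F) : UniformGrowth N w fun i => deriv (F i) := by
  refine ⟨fun i => (hF.contDiff i).iterate_deriv 1, fun k => ?_⟩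
  simpa only [← iteratedDeriv_succ'] using hF.2 (k + 1)

lemma of_deriv (hF : ∀ i, ContDiff ℝ ∞ (F i))
    (hbdd : ∃ C : ℝ, 0 ≤ C ∧ ∀ i y, ‖F i y‖ ≤ C * w i * (1 + |y|) ^ N)
    (hF' : UniformGrowth N w fun i => deriv (F i)) : UniformGrowth N w F := by
  refine ⟨hF, fun k => ?_⟩
  cases k with
  | zero => simpa using hbdd
  | succ k => simpa only [iteratedDeriv_succ'] using hF'.2 k

lemma mono_exponent (hF : UniformGrowth N w F) (hN : N ≤ N') : UniformGrowth N' w F := by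
  refine ⟨hF.1, fun k => ?_⟩
  obtain ⟨C, hC, hbdd⟩ := hF.2 k
  refine ⟨C, hC, fun i y => (hbdd i y).trans ?_⟩
  have hCw : 0 ≤ C * w i := nonneg_of_norm_le_mul (hbdd i y) (by positivity)
  gcongr
  exact one_le_one_add_abs y

lemma mono_weight {D : ℝ} (hF : UniformGrowth N w F) (hD : 0 ≤ D) (hw : ∀ i, w i ≤ D * w' i) :
    UniformGrowth N w' F := by
  refine ⟨hF.1, fun k => ?_⟩
  obtain ⟨C, hC, hbdd⟩ := hF.2 k
  refine ⟨C * D, by positivity, fun i y => (hbdd i y).trans ?_⟩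
  rw [mul_assoc C D]
  gcongr
  exact hw i

lemma reindex {κ' : Type*} (hF : UniformGrowth N w F) (p : κ' → κ) :
    UniformGrowth N (fun i => w (p i)) fun i => F (p i) := by
  refine ⟨fun i => hF.1 _, fun k => ?_⟩
  obtain ⟨C, hC, hbdd⟩ := hF.2 k
  exact ⟨C, hC, fun i => hbdd (p i)⟩

lemma hasGrowth (hF : UniformGrowth N w F) (i : κ) : HasGrowth N (F i) :=
  (hF.reindex fun _ : Unit => i).mono_weight (abs_nonneg (w i)) fun _ => by
    simpa using le_abs_self (w i)

lemma add (hF : UniformGrowth N w F) (hG : UniformGrowth N w G) :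
    UniformGrowth N w fun i y => F i y + G i y := by
  refine ⟨fun i => (hF.1 i).add (hG.1 i), fun k => ?_⟩
  obtain ⟨C, hC, hFbdd⟩ := hF.2 k
  obtain ⟨D, hD, hGbdd⟩ := hG.2 k
  refine ⟨C + D, by positivity, fun i y => ?_⟩
  rw [iteratedDeriv_fun_add (contDiffAt_of_contDiff_infty (hF.1 i) k y)
    (contDiffAt_of_contDiff_infty (hG.1 i) k y), add_mul, add_mul]
  exact (norm_add_le _ _).trans (add_le_add (hFbdd i y) (hGbdd i y))

lemma mul (hF : UniformGrowth N w F) (hG : UniformGrowth N' w' G) :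
    UniformGrowth (N + N') (fun i => w i * w' i) fun i y => F i y * G i y := by
  refine ⟨fun i => (hF.1 i).mul (hG.1 i), fun k => ?_⟩
  choose C hC hFbdd using hF.2
  choose D hD hGbdd using hG.2
  refine ⟨∑ j ∈ Finset.range (k + 1), k.choose j * C j * D (k - j),
    Finset.sum_nonneg fun j _ => mul_nonneg (mul_nonneg (by positivity) (hC j)) (hD _),
    fun i y => ?_⟩
  rw [iteratedDeriv_fun_mul (contDiffAt_of_contDiff_infty (hF.1 i) k y)
    (contDiffAt_of_contDiff_infty (hG.1 i) k y), Finset.sum_mul, Finset.sum_mul]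
  refine (norm_sum_le _ _).trans (Finset.sum_le_sum fun j _ => ?_)
  rw [norm_mul, norm_mul, Complex.norm_natCast, zpow_add₀ (by positivity : 1 + |y| ≠ 0)]
  calc (k.choose j : ℝ) * ‖iteratedDeriv j (F i) y‖ * ‖iteratedDeriv (k - j) (G i) y‖
      ≤ k.choose j * (C j * w i * (1 + |y|) ^ N) * (D (k - j) * w' i * (1 + |y|) ^ N') :=
        mul_le_mul (mul_le_mul_of_nonneg_left (hFbdd j i y) (by positivity)) (hGbdd _ i y)
          (norm_nonneg _) (mul_nonneg (by positivity) ((norm_nonneg _).trans (hFbdd j i y)))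
    _ = _ := by ring

lemma const (c : κ → ℂ) : UniformGrowth 0 (fun i => ‖c i‖) fun i _ => c i := by
  refine ⟨fun i => contDiff_const, fun k => ⟨1, zero_le_one, fun i y => ?_⟩⟩
  rw [iteratedDeriv_const]
  split_ifs <;> simp

lemma const_mul (hF : UniformGrowth N w F) (c : κ → ℂ) :
    UniformGrowth N (fun i => ‖c i‖ * w i) fun i y => c i * F i y := by
  simpa using (const c).mul hF

end UniformGrowth

lemma iteratedDeriv_cexp_I_mul (ξ : ℝ) (k : ℕ) :
    iteratedDeriv k (fun y : ℝ => Complex.exp (Complex.I * ξ * y)) =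
      fun y : ℝ => (Complex.I * ξ) ^ k * Complex.exp (Complex.I * ξ * y) := by
  induction k with
  | zero => simp
  | succ k ih =>
    funext y
    have hlin : HasDerivAt (fun y : ℝ => Complex.I * ξ * (y : ℂ)) (Complex.I * ξ) y := by
      simpa using (hasDerivAt_id y).ofReal_comp.const_mul (Complex.I * ξ)
    rw [iteratedDeriv_succ, ih, deriv_const_mul_field, hlin.cexp.deriv]
    ring

namespace HasGrowth

variable {f g : ℝ → ℂ}

lemma mul (hf : HasGrowth N f) (hg : HasGrowth N' g) : HasGrowth (N + N') fun y => f y * g y := by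
  simpa using UniformGrowth.mul hf hg

lemma const (c : ℂ) : HasGrowth 0 fun _ => c := (UniformGrowth.const fun _ => c).hasGrowth ()

lemma const_mul (hf : HasGrowth N f) (c : ℂ) : HasGrowth N fun y => c * f y :=
  (UniformGrowth.const_mul hf fun _ => c).hasGrowth ()

lemma ofReal : HasGrowth 1 fun y => (y : ℂ) := by
  have hderiv : deriv (fun y : ℝ => (y : ℂ)) = fun _ => 1 :=
    funext fun y => (hasDerivAt_id y).ofReal_comp.deriv
  refine .of_deriv (fun _ => Complex.ofRealCLM.contDiff) ⟨1, zero_le_one, by simp⟩ ?_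
  rw [hderiv]
  exact (const 1).mono_exponent zero_le_one

lemma cexp (ξ : ℝ) : HasGrowth 0 fun y => Complex.exp (Complex.I * ξ * y) := by
  refine ⟨fun _ => (contDiff_const.mul Complex.ofRealCLM.contDiff).cexp, fun k =>
    ⟨‖(Complex.I * ξ) ^ k‖, norm_nonneg _, fun _ y => ?_⟩⟩
  rw [iteratedDeriv_cexp_I_mul, norm_mul]
  simp [Complex.norm_exp]

lemma comp_add_right (hf : HasGrowth N f) (ξ : ℝ) : HasGrowth N fun s => f (s + ξ) := by
  refine ⟨fun _ => (hf.contDiff ()).comp (contDiff_id.add contDiff_const), fun k => ?_⟩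
  obtain ⟨C, hC, hbdd⟩ := hf.2 k
  refine ⟨C * (1 + |ξ|) ^ N.natAbs, by positivity, fun _ y => ?_⟩
  rw [iteratedDeriv_comp_add_const]
  refine (hbdd () _).trans ?_
  rw [mul_one, mul_one, mul_assoc]
  refine mul_le_mul_of_nonneg_left ?_ hC
  have peetre (a b : ℝ) : 1 + |a + b| ≤ (1 + |b|) * (1 + |a|) := by
    nlinarith [abs_add_le a b, abs_nonneg a, abs_nonneg b]
  obtain ⟨M, rfl | rfl⟩ := N.eq_nat_or_neg
  · simp only [zpow_natCast, Int.natAbs_natCast]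
    rw [← mul_pow]
    gcongr
    exact peetre y ξ
  · simp only [zpow_neg, zpow_natCast, Int.natAbs_neg, Int.natAbs_natCast]
    rw [← div_eq_mul_inv, le_div_iff₀ (by positivity), inv_mul_le_iff₀ (by positivity), ← mul_pow]
    gcongr
    have hback := peetre (y + ξ) (-ξ)
    rw [add_neg_cancel_right, abs_neg] at hback
    rwa [mul_comm]

end HasGrowth

/-- The weight `(1 + iσ)⁻ᴷ`; integrating by parts against `e^{-iyσ}`, it is compensated by the
operator `(1 + d/dy)ᴷ`. -/
def decayWeight (K : ℕ) (σ : ℝ) : ℂ := ((1 + Complex.I * σ) ^ K)⁻¹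

lemma one_add_I_mul_ne_zero (σ : ℝ) : 1 + Complex.I * σ ≠ 0 := fun h => by
  simpa using congrArg Complex.re h

lemma one_add_abs_le_two_mul_norm (σ : ℝ) : 1 + |σ| ≤ 2 * ‖1 + Complex.I * σ‖ := by
  have hre := Complex.abs_re_le_norm (1 + Complex.I * σ)
  have him := Complex.abs_im_le_norm (1 + Complex.I * σ)
  simp only [Complex.add_re, Complex.one_re, Complex.re_mul_ofReal, Complex.I_re, zero_mul,
    add_zero, abs_one, Complex.add_im, Complex.one_im, Complex.im_mul_ofReal, Complex.I_im,
    one_mul, zero_add] at hre him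
  linarith

lemma deriv_decayWeight (K : ℕ) :
    deriv (decayWeight K) = fun σ => -(K * Complex.I) * decayWeight (K + 1) σ := by
  funext σ
  have hlin : HasDerivAt (fun σ : ℝ => 1 + Complex.I * (σ : ℂ)) Complex.I σ := by
    simpa using ((hasDerivAt_id σ).ofReal_comp.const_mul Complex.I).const_add 1
  have hne := one_add_I_mul_ne_zero σ
  refine ((hlin.pow K).inv (pow_ne_zero K hne)).deriv.trans ?_
  cases K with
  | zero => simp
  | succ n =>
    simp only [decayWeight, Nat.add_sub_cancel, Pi.pow_apply]
    field_simp
    ring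

lemma contDiff_decayWeight (K : ℕ) : ContDiff ℝ ∞ (decayWeight K) :=
  ((contDiff_const.add (contDiff_const.mul Complex.ofRealCLM.contDiff)).pow K).inv fun σ =>
    pow_ne_zero K (one_add_I_mul_ne_zero σ)

lemma norm_decayWeight_le (K : ℕ) (σ : ℝ) :
    ‖decayWeight K σ‖ ≤ 2 ^ K * (1 + |σ|) ^ (-(K : ℤ)) := by
  have hpos : 0 < ‖1 + Complex.I * σ‖ := norm_pos_iff.2 (one_add_I_mul_ne_zero σ)
  rw [decayWeight, norm_inv, norm_pow, zpow_neg, zpow_natCast, ← div_eq_mul_inv,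
    le_div_iff₀ (by positivity), inv_mul_le_iff₀ (by positivity), ← mul_pow, mul_comm]
  gcongr
  exact one_add_abs_le_two_mul_norm σ

lemma hasGrowth_decayWeight (K : ℕ) : HasGrowth (-(K : ℤ)) (decayWeight K) := by
  refine ⟨fun _ => contDiff_decayWeight K, fun k => ?_⟩
  induction k generalizing K with
  | zero => exact ⟨2 ^ K, by positivity, fun _ y => by simpa using norm_decayWeight_le K y⟩
  | succ k ih =>
    obtain ⟨C, hC, hbdd⟩ := ih (K + 1)
    refine ⟨‖(-(K * Complex.I) : ℂ)‖ * C, by positivity, fun i y => ?_⟩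
    rw [iteratedDeriv_succ', deriv_decayWeight, iteratedDeriv_const_mul_field, norm_mul,
      mul_assoc _ C, mul_assoc]
    gcongr
    refine (hbdd i y).trans ?_
    gcongr
    · exact one_le_one_add_abs y
    · simp

lemma UniformGrowth.mul_decayWeight (hF : UniformGrowth N w F) {K : ℕ} (hK : N + 2 ≤ K) :
    UniformGrowth (-2) w fun i σ => F i σ * decayWeight K σ := by
  simpa using (hF.mul ((hasGrowth_decayWeight K).reindex fun _ : κ => ())).mono_exponent
    (N' := -2) (by omega)

end Growth

/-! ### The Fourier transform -/

section Fourier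

variable {κ : Type*} {N : ℤ} {w : κ → ℝ} {F : κ → ℝ → ℂ} {f g : ℝ → ℂ}

lemma integrable_one_add_abs_zpow : Integrable fun y : ℝ => (1 + |y|) ^ (-2 : ℤ) := by
  refine (integrable_one_add_norm (E := ℝ) (r := 2) (by simp)).congr (ae_of_all _ fun y => ?_)
  norm_cast

lemma integral_one_add_abs_zpow_nonneg : 0 ≤ ∫ y : ℝ, (1 + |y|) ^ (-2 : ℤ) :=
  integral_nonneg fun y => by positivity

lemma integrable_of_norm_le (hf : Continuous f) {C : ℝ}
    (hbdd : ∀ y, ‖f y‖ ≤ C * (1 + |y|) ^ (-2 : ℤ)) : Integrable f :=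
  (integrable_one_add_abs_zpow.const_mul C).mono' hf.aestronglyMeasurable (ae_of_all _ hbdd)

lemma integral_norm_le {C : ℝ} (hbdd : ∀ y, ‖f y‖ ≤ C * (1 + |y|) ^ (-2 : ℤ)) :
    ∫ y, ‖f y‖ ≤ C * ∫ y : ℝ, (1 + |y|) ^ (-2 : ℤ) := by
  rw [← integral_const_mul]
  exact integral_mono_of_nonneg (ae_of_all _ fun y => norm_nonneg _)
    (integrable_one_add_abs_zpow.const_mul C) (ae_of_all _ hbdd)

lemma UniformGrowth.integrable (hF : UniformGrowth N w F) (hN : N ≤ -2) (i : κ) :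
    Integrable (F i) := by
  obtain ⟨C, -, hbdd⟩ := (hF.mono_exponent hN).norm_le
  exact integrable_of_norm_le (hF.continuous i) (hbdd i)

lemma UniformGrowth.integrable_iteratedDeriv (hF : UniformGrowth N w F) (hN : N ≤ -2) (i : κ)
    (k : ℕ) : Integrable (iteratedDeriv k (F i)) := by
  obtain ⟨C, -, hbdd⟩ := (hF.mono_exponent hN).2 k
  exact integrable_of_norm_le
    ((hF.contDiff i).continuous_iteratedDeriv k (by exact_mod_cast le_top))
    (hbdd i)

/-- The bilinear form for which Mathlib's vector Fourier integral is `FT`. -/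
def fourierForm : ℝ →ₗ[ℝ] ℝ →ₗ[ℝ] ℝ := (2 * Real.pi)⁻¹ • LinearMap.mul ℝ ℝ

lemma continuous_fourierForm : Continuous fun p : ℝ × ℝ => fourierForm p.1 p.2 := by
  simp only [fourierForm, LinearMap.smul_apply, LinearMap.mul_apply']
  fun_prop

lemma flip_fourierForm : fourierForm.flip = fourierForm := by
  refine LinearMap.ext₂ fun x y => ?_
  simp only [fourierForm, LinearMap.flip_apply, LinearMap.smul_apply, LinearMap.mul_apply',
    mul_comm x y]

lemma FT_eq_fourierIntegral (f : ℝ → ℂ) :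
    FT f = VectorFourier.fourierIntegral Real.fourierChar volume fourierForm f := by
  funext ξ
  refine integral_congr_ae (ae_of_all _ fun y => ?_)
  simp only [fourierForm, LinearMap.smul_apply, LinearMap.mul_apply', Circle.smul_def,
    Real.fourierChar_apply, smul_eq_mul]
  congr 2
  push_cast
  field_simp

lemma FT_eq_fourier (f : ℝ → ℂ) (ξ : ℝ) :
    FT f ξ = FourierTransform.fourier f (ξ / (2 * Real.pi)) := by
  rw [Real.fourier_real_eq_integral_exp_smul]
  refine integral_congr_ae (ae_of_all _ fun y => ?_)
  simp only [smul_eq_mul]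
  congr 2
  push_cast
  field_simp

lemma norm_FT_le (f : ℝ → ℂ) (ξ : ℝ) : ‖FT f ξ‖ ≤ ∫ y, ‖f y‖ := by
  rw [FT_eq_fourierIntegral]
  exact VectorFourier.norm_fourierIntegral_le_integral_norm _ _ _ _ _

lemma continuous_FT (hf : Integrable f) : Continuous (FT f) := by
  rw [FT_eq_fourierIntegral]
  exact VectorFourier.fourierIntegral_continuous Real.continuous_fourierChar
    continuous_fourierForm hf

lemma FT_add (hf : Integrable f) (hg : Integrable g) (ξ : ℝ) :
    FT (fun y => f y + g y) ξ = FT f ξ + FT g ξ := by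
  simp only [FT_eq_fourierIntegral]
  exact congrFun (VectorFourier.fourierIntegral_add Real.continuous_fourierChar
    continuous_fourierForm hf hg) ξ

lemma FT_const_mul (c : ℂ) (f : ℝ → ℂ) (ξ : ℝ) : FT (fun y => c * f y) ξ = c * FT f ξ := by
  simp only [FT_eq_fourierIntegral]
  exact congrFun (VectorFourier.fourierIntegral_const_smul _ _ _ f c) ξ

lemma integral_FT_mul (hf : Integrable f) (hg : Integrable g) :
    ∫ ξ, FT f ξ * g ξ = ∫ y, f y * FT g y := by
  simp only [FT_eq_fourierIntegral]
  refine (VectorFourier.integral_fourierIntegral_smul_eq_flip Real.continuous_fourierChar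
    continuous_fourierForm hf hg).trans ?_
  simp only [flip_fourierForm, smul_eq_mul]

lemma FT_iteratedDeriv (hf : ContDiff ℝ ∞ f) (hint : ∀ k, Integrable (iteratedDeriv k f)) (k : ℕ)
    (ξ : ℝ) : FT (iteratedDeriv k f) ξ = (Complex.I * ξ) ^ k * FT f ξ := by
  simp only [FT_eq_fourier]
  rw [Real.fourier_iteratedDeriv hf (fun n _ => hint n) (by exact_mod_cast le_top)]
  simp only [smul_eq_mul]
  congr 2
  push_cast
  field_simp

lemma FT_cexp_mul (f : ℝ → ℂ) (ξ s : ℝ) :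
    FT (fun y => Complex.exp (Complex.I * ξ * y) * f y) s = FT f (s - ξ) := by
  refine integral_congr_ae (ae_of_all _ fun y => ?_)
  simp only [← mul_assoc, ← Complex.exp_add]
  congr 2
  push_cast
  ring

lemma UniformGrowth.norm_FT_le (hF : UniformGrowth N w F) (hN : N ≤ -2) (L : ℕ) :
    ∃ C : ℝ, 0 ≤ C ∧ ∀ i ξ, ‖FT (F i) ξ‖ ≤ C * w i * (1 + |ξ|) ^ (-(L : ℤ)) := by
  choose C hC hbdd using (hF.mono_exponent hN).2
  set I := ∫ y : ℝ, (1 + |y|) ^ (-2 : ℤ)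
  have hmoment (k : ℕ) (i : κ) (ξ : ℝ) : |ξ| ^ k * ‖FT (F i) ξ‖ ≤ C k * w i * I := by
    have hFT := FT_iteratedDeriv (hF.contDiff i) (hF.integrable_iteratedDeriv hN i) k ξ
    have hle := (_root_.norm_FT_le (iteratedDeriv k (F i)) ξ).trans (integral_norm_le (hbdd k i))
    rwa [hFT, norm_mul, norm_pow, norm_mul, Complex.norm_I, one_mul, Complex.norm_real] at hle
  refine ⟨∑ k ∈ Finset.range (L + 1), C k * I * L.choose k, Finset.sum_nonneg fun k _ =>
    mul_nonneg (mul_nonneg (hC k) integral_one_add_abs_zpow_nonneg) (by positivity), fun i ξ => ?_⟩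
  rw [zpow_neg, zpow_natCast, ← div_eq_mul_inv, le_div_iff₀ (by positivity), add_comm 1 |ξ|,
    add_pow, Finset.mul_sum, Finset.sum_mul]
  refine Finset.sum_le_sum fun k _ => ?_
  calc ‖FT (F i) ξ‖ * (|ξ| ^ k * 1 ^ (L - k) * L.choose k)
      = |ξ| ^ k * ‖FT (F i) ξ‖ * L.choose k := by ring
    _ ≤ C k * w i * I * L.choose k :=
        mul_le_mul_of_nonneg_right (hmoment k i ξ) (by positivity)
    _ = C k * I * L.choose k * w i := by ring

end Fourier

/-! ### The regularised pairing -/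

section Pairing

variable {κ : Type*} {N N' : ℤ} {w w' : κ → ℝ} {F G : κ → ℝ → ℂ} {f g g' : ℝ → ℂ} {K : ℕ}

/-- The operator `1 + d/dy`. -/
def oneAddDeriv (g : ℝ → ℂ) (y : ℝ) : ℂ := g y + deriv g y

/-- The oscillatory integral `(2π)⁻¹ ∬ e^{-iyσ} f(σ) g(y) dy dσ`, made absolutely convergent for
`f`, `g` of polynomial growth by `K` integrations by parts in `y`; the value does not depend on
`K` once `K` exceeds the growth exponent of `f` by `2`. -/
def oscPairing (K : ℕ) (f g : ℝ → ℂ) : ℂ :=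
  (2 * Real.pi : ℂ)⁻¹ * ∫ y, FT (fun σ => f σ * decayWeight K σ) y * oneAddDeriv^[K] g y

lemma UniformGrowth.iterate_oneAddDeriv (hG : UniformGrowth N w G) (K : ℕ) :
    UniformGrowth N w fun i => oneAddDeriv^[K] (G i) := by
  induction K generalizing G with
  | zero => exact hG
  | succ _ ih => exact ih (hG.add hG.deriv)

lemma oneAddDeriv_iterate_const_mul (c : ℂ) (g : ℝ → ℂ) (K : ℕ) :
    oneAddDeriv^[K] (fun y => c * g y) = fun y => c * oneAddDeriv^[K] g y := by
  induction K generalizing g with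
  | zero => rfl
  | succ K ih =>
    simp only [Function.iterate_succ_apply]
    rw [← ih]
    congr 1
    funext y
    simp only [oneAddDeriv, deriv_const_mul_field]
    ring

lemma oneAddDeriv_iterate_congr {y : ℝ} (h : g =ᶠ[𝓝 y] g') (K : ℕ) :
    oneAddDeriv^[K] g =ᶠ[𝓝 y] oneAddDeriv^[K] g' := by
  induction K generalizing g g' with
  | zero => exact h
  | succ _ ih => exact ih (h.add h.deriv)

lemma UniformGrowth.norm_oscPairing_integrand_le (hF : UniformGrowth N w F)
    (hG : UniformGrowth N' w' G) (hK : N + 2 ≤ K) :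
    ∃ C : ℝ, 0 ≤ C ∧ ∀ i y,
      ‖FT (fun σ => F i σ * decayWeight K σ) y * oneAddDeriv^[K] (G i) y‖ ≤
        C * (w i * w' i) * (1 + |y|) ^ (-2 : ℤ) := by
  set L := (N' + 2).toNat
  obtain ⟨C, hC, hFbdd⟩ := (hF.mul_decayWeight hK).norm_FT_le le_rfl L
  obtain ⟨D, hD, hGbdd⟩ := (hG.iterate_oneAddDeriv K).norm_le
  refine ⟨C * D, by positivity, fun i y => ?_⟩
  have hpos : 0 < 1 + |y| := by positivity
  have hCw := nonneg_of_norm_le_mul (hFbdd i y) (by positivity)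
  have hDw := nonneg_of_norm_le_mul (hGbdd i y) (by positivity)
  calc ‖FT (fun σ => F i σ * decayWeight K σ) y * oneAddDeriv^[K] (G i) y‖
      ≤ C * w i * (1 + |y|) ^ (-(L : ℤ)) * (D * w' i * (1 + |y|) ^ N') := by
        rw [norm_mul]
        exact mul_le_mul (hFbdd i y) (hGbdd i y) (norm_nonneg _)
          (mul_nonneg hCw (by positivity))
    _ = C * w i * (D * w' i) * (1 + |y|) ^ (-(L : ℤ) + N') := by
        rw [zpow_add₀ hpos.ne']
        ring
    _ ≤ C * w i * (D * w' i) * (1 + |y|) ^ (-2 : ℤ) :=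
        mul_le_mul_of_nonneg_left (zpow_le_zpow_right₀ (one_le_one_add_abs y) (by omega))
          (mul_nonneg hCw hDw)
    _ = C * D * (w i * w' i) * (1 + |y|) ^ (-2 : ℤ) := by ring

lemma UniformGrowth.norm_oscPairing_le (hF : UniformGrowth N w F) (hG : UniformGrowth N' w' G)
    (hK : N + 2 ≤ K) : ∃ C : ℝ, 0 ≤ C ∧ ∀ i, ‖oscPairing K (F i) (G i)‖ ≤ C * (w i * w' i) := by
  obtain ⟨C, hC, hbdd⟩ := hF.norm_oscPairing_integrand_le hG hK
  refine ⟨‖(2 * Real.pi : ℂ)⁻¹‖ * (C * ∫ y : ℝ, (1 + |y|) ^ (-2 : ℤ)),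
    mul_nonneg (norm_nonneg _) (mul_nonneg hC integral_one_add_abs_zpow_nonneg), fun i => ?_⟩
  rw [oscPairing, norm_mul, mul_assoc, mul_right_comm C]
  gcongr
  exact (norm_integral_le_integral_norm _).trans (integral_norm_le (hbdd i))

namespace HasGrowth

lemma integrable_mul_decayWeight (hf : HasGrowth N f) (hK : N + 2 ≤ K) :
    Integrable fun σ => f σ * decayWeight K σ :=
  (hf.mul_decayWeight hK).integrable le_rfl ()

lemma integrable_oscPairing (hf : HasGrowth N f) (hg : HasGrowth N' g) (hK : N + 2 ≤ K) :
    Integrable fun y => FT (fun σ => f σ * decayWeight K σ) y * oneAddDeriv^[K] g y := by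
  obtain ⟨C, -, hbdd⟩ := UniformGrowth.norm_oscPairing_integrand_le hf hg hK
  exact integrable_of_norm_le ((continuous_FT (hf.integrable_mul_decayWeight hK)).mul
    ((hg.iterate_oneAddDeriv K).continuous ())) (hbdd ())

end HasGrowth

lemma oscPairing_const_mul_left (K : ℕ) (c : ℂ) (f g : ℝ → ℂ) :
    oscPairing K (fun σ => c * f σ) g = c * oscPairing K f g := by
  simp only [oscPairing, mul_assoc, FT_const_mul]
  rw [integral_const_mul, mul_left_comm]

lemma oscPairing_const_mul_right (K : ℕ) (c : ℂ) (f g : ℝ → ℂ) :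
    oscPairing K f (fun y => c * g y) = c * oscPairing K f g := by
  simp only [oscPairing, oneAddDeriv_iterate_const_mul, mul_left_comm _ c]
  rw [integral_const_mul, mul_left_comm]

/-! ### Rapidly decreasing functions -/

/-- Schwartz functions, in terms of `HasGrowth`. -/
def IsRapidlyDecreasing (v : ℝ → ℂ) : Prop := ∀ L : ℕ, HasGrowth (-(L : ℤ)) v

namespace IsRapidlyDecreasing

variable {v : ℝ → ℂ}

lemma contDiff (hv : IsRapidlyDecreasing v) : ContDiff ℝ ∞ v := (hv 0).contDiff ()

lemma integrable (hv : IsRapidlyDecreasing v) : Integrable v :=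
  (hv 2).integrable (by norm_num) ()

protected lemma deriv (hv : IsRapidlyDecreasing v) : IsRapidlyDecreasing (deriv v) :=
  fun L => (hv L).deriv

protected lemma oneAddDeriv (hv : IsRapidlyDecreasing v) : IsRapidlyDecreasing (oneAddDeriv v) :=
  fun L => (hv L).iterate_oneAddDeriv 1

lemma FT_iteratedDeriv (hv : IsRapidlyDecreasing v) (k : ℕ) (ξ : ℝ) :
    FT (iteratedDeriv k v) ξ = (Complex.I * ξ) ^ k * FT v ξ :=
  _root_.FT_iteratedDeriv hv.contDiff ((hv 2).integrable_iteratedDeriv (by norm_num) ()) k ξ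

lemma FT_deriv (hv : IsRapidlyDecreasing v) (ξ : ℝ) : FT (deriv v) ξ = Complex.I * ξ * FT v ξ := by
  simpa only [iteratedDeriv_one, pow_one] using hv.FT_iteratedDeriv 1 ξ

lemma FT_iterate_oneAddDeriv (hv : IsRapidlyDecreasing v) (K : ℕ) (ξ : ℝ) :
    FT (oneAddDeriv^[K] v) ξ = (1 + Complex.I * ξ) ^ K * FT v ξ := by
  induction K generalizing v with
  | zero => simp
  | succ K ih =>
    have hone : FT (oneAddDeriv v) ξ = (1 + Complex.I * ξ) * FT v ξ := by
      rw [add_mul, one_mul, ← hv.FT_deriv]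
      exact FT_add hv.integrable hv.deriv.integrable ξ
    rw [Function.iterate_succ_apply, ih hv.oneAddDeriv, hone, pow_succ, mul_assoc]

lemma mul_left (hv : IsRapidlyDecreasing v) (hf : HasGrowth N f) :
    IsRapidlyDecreasing fun y => f y * v y := fun L =>
  (hf.mul (hv (L + N.toNat))).mono_exponent (by have := Int.self_le_toNat N; omega)

lemma of_hasCompactSupport (hv : ContDiff ℝ ∞ v) (hc : HasCompactSupport v) :
    IsRapidlyDecreasing v := by
  refine fun L => ⟨fun _ => hv, fun k => ?_⟩
  have hck : HasCompactSupport (iteratedDeriv k v) := by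
    induction k with
    | zero => simpa using hc
    | succ k ih =>
      rw [iteratedDeriv_succ]
      exact ih.deriv
  have hcont : Continuous fun y : ℝ => iteratedDeriv k v y * ((1 + |y| : ℝ) : ℂ) ^ L :=
    (hv.continuous_iteratedDeriv k (by exact_mod_cast le_top)).mul (by fun_prop)
  obtain ⟨C, hC⟩ := hcont.bounded_above_of_compact_support hck.mul_right
  refine ⟨C, (norm_nonneg _).trans (hC 0), fun _ y => ?_⟩
  have hpos : 0 < 1 + |y| := by positivity
  rw [mul_one, zpow_neg, zpow_natCast, ← div_eq_mul_inv, le_div_iff₀ (by positivity)]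
  simpa only [norm_mul, norm_pow, Complex.norm_real, Real.norm_of_nonneg hpos.le] using hC y

lemma integrable_FT (hv : IsRapidlyDecreasing v) : Integrable (FT v) := by
  obtain ⟨C, -, hbdd⟩ := (hv 2).norm_FT_le (by norm_num) 2
  exact integrable_of_norm_le (continuous_FT hv.integrable) (hbdd ())

lemma fourier_inversion (hv : IsRapidlyDecreasing v) (x : ℝ) :
    (2 * Real.pi : ℂ)⁻¹ * ∫ ξ : ℝ, Complex.exp (Complex.I * x * ξ) * FT v ξ = v x := by
  have hpi : (2 * Real.pi : ℝ) ≠ 0 := by positivity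
  have hint : Integrable (FourierTransform.fourier v) := by
    simpa only [FT_eq_fourier, mul_div_cancel_right₀ _ hpi] using
      hv.integrable_FT.comp_mul_right' hpi
  have hinv := congrFun (hv.contDiff.continuous.fourierInv_fourier_eq hv.integrable hint) x
  have hscale := Measure.integral_comp_div (fun ξ : ℝ =>
    Complex.exp ((2 * Real.pi * inner ℝ ξ x : ℝ) * Complex.I) • FourierTransform.fourier v ξ)
    (2 * Real.pi)
  rw [← Real.fourierInv_eq', hinv, abs_of_pos (by positivity), Complex.real_smul] at hscale
  have hintegrand : (fun ξ : ℝ => Complex.exp (Complex.I * x * ξ) * FT v ξ) = fun ξ : ℝ =>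
      Complex.exp ((2 * Real.pi * inner ℝ (ξ / (2 * Real.pi)) x : ℝ) * Complex.I) •
        FourierTransform.fourier v (ξ / (2 * Real.pi)) := by
    funext ξ
    rw [FT_eq_fourier, smul_eq_mul]
    congr 2
    simp only [RCLike.inner_apply, conj_trivial]
    push_cast
    field_simp
  rw [hintegrand, hscale]
  push_cast
  field_simp

end IsRapidlyDecreasing

/-! ### Calculus of the pairing -/

lemma HasGrowth.oscPairing_eq_integral (hf : HasGrowth N f) (hg : IsRapidlyDecreasing g)
    (hK : N + 2 ≤ K) : oscPairing K f g = (2 * Real.pi : ℂ)⁻¹ * ∫ σ, f σ * FT g σ := by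
  rw [oscPairing, integral_FT_mul (hf.integrable_mul_decayWeight hK)
    (((hg 2).iterate_oneAddDeriv K).integrable (by norm_num) ())]
  congr 2
  funext σ
  have hne := one_add_I_mul_ne_zero σ
  rw [hg.FT_iterate_oneAddDeriv, decayWeight]
  field_simp

lemma exists_cutoff : ∃ χ : ℕ → ℝ → ℂ, UniformGrowth 0 (fun _ => 1) χ ∧
    (∀ n, HasCompactSupport (χ n)) ∧ ∀ y, ∀ᶠ n in atTop, χ n =ᶠ[𝓝 y] fun _ => 1 := by
  let b : ContDiffBump (0 : ℝ) := ⟨1, 2, by norm_num, by norm_num⟩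
  have hsmooth : ContDiff ℝ ∞ fun y => (b y : ℂ) := Complex.ofRealCLM.contDiff.comp b.contDiff
  have hsupp : HasCompactSupport fun y => (b y : ℂ) :=
    b.hasCompactSupport.comp_left (g := fun t : ℝ => (t : ℂ)) (by simp)
  refine ⟨fun n y => b ((n + 1 : ℝ)⁻¹ * y), ⟨fun n => ?_, fun k => ?_⟩, fun n => ?_, fun y => ?_⟩
  · exact hsmooth.comp (contDiff_const.mul contDiff_id)
  · obtain ⟨C, hC, hbdd⟩ := (IsRapidlyDecreasing.of_hasCompactSupport hsmooth hsupp 0).2 k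
    refine ⟨C, hC, fun n y => ?_⟩
    rw [congrFun (iteratedDeriv_comp_const_smul (n := k)
      (hsmooth.of_le (by exact_mod_cast le_top)) (n + 1 : ℝ)⁻¹) y, norm_smul, norm_pow]
    have hle : ‖(n + 1 : ℝ)⁻¹‖ ≤ 1 := by
      rw [Real.norm_of_nonneg (by positivity)]
      exact inv_le_one_of_one_le₀ (by simp)
    exact (mul_le_of_le_one_left (norm_nonneg _) (pow_le_one₀ (norm_nonneg _) hle)).trans
      (by simpa using hbdd () ((n + 1 : ℝ)⁻¹ * y))
  · exact hsupp.comp_homeomorph (Homeomorph.mulLeft₀ (n + 1 : ℝ)⁻¹ (by positivity))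
  · obtain ⟨M, hM⟩ := exists_nat_gt (|y| + 1)
    filter_upwards [eventually_ge_atTop M] with n hn
    filter_upwards [Metric.ball_mem_nhds y one_pos] with z hz
    have hz' : |z| ≤ n + 1 := by
      have hdist : |z - y| < 1 := hz
      have hMn : (M : ℝ) ≤ n := by exact_mod_cast hn
      linarith [abs_sub_abs_le_abs_sub z y]
    have hmem : (n + 1 : ℝ)⁻¹ * z ∈ Metric.closedBall 0 b.rIn := by
      rw [mem_closedBall_zero_iff, norm_mul, Real.norm_of_nonneg (by positivity),
        inv_mul_le_iff₀ (by positivity)]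
      simpa [b] using hz'
    simp [b.one_of_mem_closedBall hmem]

lemma HasGrowth.exists_approx (hg : HasGrowth N g) : ∃ G : ℕ → ℝ → ℂ,
    UniformGrowth N (fun _ => 1) G ∧ (∀ n, IsRapidlyDecreasing (G n)) ∧
      ∀ y, ∀ᶠ n in atTop, G n =ᶠ[𝓝 y] g := by
  obtain ⟨χ, hχ, hsupp, hone⟩ := exists_cutoff
  refine ⟨fun n y => χ n y * g y, ?_, fun n => ?_, fun y => ?_⟩
  · simpa using hχ.mul (hg.reindex fun _ : ℕ => ())
  · exact .of_hasCompactSupport ((hχ.contDiff n).mul (hg.contDiff ())) (hsupp n).mul_right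
  · filter_upwards [hone y] with n hn
    filter_upwards [hn] with z hz
    rw [hz, one_mul]

lemma HasGrowth.tendsto_oscPairing {G : ℕ → ℝ → ℂ} (hf : HasGrowth N f)
    (hG : UniformGrowth N' (fun _ => 1) G) (hlim : ∀ y, ∀ᶠ n in atTop, G n =ᶠ[𝓝 y] g)
    (hK : N + 2 ≤ K) :
    Tendsto (fun n => oscPairing K f (G n)) atTop (𝓝 (oscPairing K f g)) := by
  obtain ⟨C, -, hbdd⟩ :=
    UniformGrowth.norm_oscPairing_integrand_le (hf.reindex fun _ : ℕ => ()) hG hK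
  refine (tendsto_integral_of_dominated_convergence (fun y => C * (1 * 1) * (1 + |y|) ^ (-2 : ℤ))
    (fun n => (hf.integrable_oscPairing (hG.hasGrowth n) hK).aestronglyMeasurable)
    (integrable_one_add_abs_zpow.const_mul _) (fun n => ae_of_all _ (hbdd n))
    (ae_of_all _ fun y => ?_)).const_mul _
  refine tendsto_const_nhds.congr' ?_
  filter_upwards [hlim y] with n hn
  rw [(oneAddDeriv_iterate_congr hn K).eq_of_nhds]

lemma HasGrowth.oscPairing_cexp_mul (hf : HasGrowth N f) (hg : HasGrowth N' g) (hK : N + 2 ≤ K)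
    (ξ : ℝ) : oscPairing K f (fun y => Complex.exp (Complex.I * ξ * y) * g y) =
      oscPairing K (fun σ => f (σ + ξ)) g := by
  obtain ⟨G, hG, hGs, hlim⟩ := hg.exists_approx
  have hmod : UniformGrowth (0 + N') (fun _ => 1)
      fun n y => Complex.exp (Complex.I * ξ * y) * G n y := by
    simpa only [mul_one] using ((HasGrowth.cexp ξ).reindex fun _ : ℕ => ()).mul hG
  have hleft := hf.tendsto_oscPairing (K := K)
    (g := fun y => Complex.exp (Complex.I * ξ * y) * g y) hmod
    (fun y => (hlim y).mono fun n hn => by filter_upwards [hn] with z hz; rw [hz]) hK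
  refine tendsto_nhds_unique hleft (((hf.comp_add_right ξ).tendsto_oscPairing hG hlim hK).congr
    fun n => ?_)
  rw [(hf.comp_add_right ξ).oscPairing_eq_integral (hGs n) hK,
    hf.oscPairing_eq_integral ((hGs n).mul_left (HasGrowth.cexp ξ)) hK,
    ← integral_add_right_eq_self (fun σ => f σ * FT _ σ) ξ]
  simp only [FT_cexp_mul, add_sub_cancel_right]

lemma HasGrowth.oscPairing_I_mul (hf : HasGrowth N f) (hg : HasGrowth N' g) (hK : N + 3 ≤ K) :
    oscPairing K (fun σ => Complex.I * σ * f σ) g = oscPairing K f (deriv g) := by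
  obtain ⟨G, hG, hGs, hlim⟩ := hg.exists_approx
  have hIf : HasGrowth (1 + N) fun σ => Complex.I * σ * f σ :=
    (HasGrowth.ofReal.const_mul Complex.I).mul hf
  have hright := hf.tendsto_oscPairing (K := K) hG.deriv
    (fun y => (hlim y).mono fun n hn => hn.deriv) (by omega)
  refine tendsto_nhds_unique (hIf.tendsto_oscPairing hG hlim (by omega)) (hright.congr fun n => ?_)
  rw [hIf.oscPairing_eq_integral (hGs n) (by omega),
    hf.oscPairing_eq_integral (hGs n).deriv (by omega)]
  congr 2
  funext σ
  rw [(hGs n).FT_deriv]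
  ring

lemma HasGrowth.oscPairing_const (c : ℂ) (hg : HasGrowth N g) (hK : 2 ≤ K) :
    oscPairing K (fun _ => c) g = c * g 0 := by
  obtain ⟨G, hG, hGs, hlim⟩ := hg.exists_approx
  refine tendsto_nhds_unique
    ((HasGrowth.const c).tendsto_oscPairing (K := K) hG hlim (by omega)) ?_
  refine tendsto_const_nhds.congr' ?_
  filter_upwards [hlim 0] with n hn
  rw [(HasGrowth.const c).oscPairing_eq_integral (hGs n) (by omega), ← hn.eq_of_nhds,
    ← (hGs n).fourier_inversion 0, integral_const_mul, mul_left_comm]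
  simp

end Pairing

/-! ### Parameter derivatives of the pairing -/

section Parameter

variable {N N' : ℤ} {F F' G : ℝ → ℝ → ℂ} {t : Set ℝ} {s : ℝ} {K : ℕ}

/-- `HasGrowth N (F s)`, uniformly for `s ∈ t`. -/
abbrev HasGrowthOn (N : ℤ) (t : Set ℝ) (F : ℝ → ℝ → ℂ) : Prop :=
  UniformGrowth N (fun _ : t => 1) fun s => F s

lemma norm_exp_neg_I_mul (y ξ : ℝ) : ‖Complex.exp (-(Complex.I * y * ξ))‖ = 1 := by
  simp [Complex.norm_exp]

lemma HasGrowthOn.hasDerivAt_FT (hF : HasGrowthOn (-2) t F) (hF' : HasGrowthOn (-2) t F')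
    (ht : IsOpen t) (hs : s ∈ t) (hderiv : ∀ s σ, HasDerivAt (F · σ) (F' s σ) s) (y : ℝ) :
    HasDerivAt (fun s => FT (F s) y) (FT (F' s) y) s := by
  obtain ⟨C, -, hbdd⟩ := hF'.norm_le
  have hcont {v : ℝ → ℂ} (hv : Continuous v) :
      Continuous fun σ : ℝ => Complex.exp (-(Complex.I * σ * y)) * v σ := by fun_prop
  have hmem := ht.mem_nhds hs
  refine (hasDerivAt_integral_of_dominated_loc_of_deriv_le hmem
    (bound := fun σ => C * 1 * (1 + |σ|) ^ (-2 : ℤ)) ?_ ?_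
    (hcont (hF'.continuous ⟨s, hs⟩)).aestronglyMeasurable
    (ae_of_all _ fun σ r hr => ?_) (integrable_one_add_abs_zpow.const_mul _)
    (ae_of_all _ fun σ r _ => (hderiv r σ).const_mul _)).2
  · filter_upwards [hmem] with r hr
    exact (hcont (hF.continuous ⟨r, hr⟩)).aestronglyMeasurable
  · refine ((hF.integrable le_rfl ⟨s, hs⟩).norm).mono'
      (hcont (hF.continuous ⟨s, hs⟩)).aestronglyMeasurable (ae_of_all _ fun σ => ?_)
    rw [norm_mul, norm_exp_neg_I_mul, one_mul]
  · rw [norm_mul, norm_exp_neg_I_mul, one_mul]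
    exact hbdd ⟨r, hr⟩ σ

lemma IsSmooth.oneAddDeriv_eq (hG : IsSmooth G) (s : ℝ) :
    oneAddDeriv (G s) = fun y => G s y + ∂₂ G s y :=
  funext fun y => congrArg (G s y + ·) (hG.hasDerivAt_right s y).deriv

lemma IsSmooth.hasDerivAt_iterate_oneAddDeriv (hG : IsSmooth G) (K : ℕ) (s y : ℝ) :
    HasDerivAt (fun s => oneAddDeriv^[K] (G s) y) (oneAddDeriv^[K] (∂₁ G s) y) s := by
  induction K generalizing G with
  | zero => exact hG.hasDerivAt_left s y
  | succ K ih =>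
    have hsum := ih (hG.add (hG.dirDeriv (0, 1)))
    rw [dirDeriv_add _ hG (hG.dirDeriv _), hG.dirDeriv_comm] at hsum
    simpa only [Function.iterate_succ_apply, hG.oneAddDeriv_eq,
      (hG.dirDeriv (1, 0)).oneAddDeriv_eq] using hsum

lemma HasGrowthOn.hasDerivAt_oscPairing (hF : HasGrowthOn N t F) (hF' : HasGrowthOn N t F')
    (hG : HasGrowthOn N' t G) (hG' : HasGrowthOn N' t (∂₁ G)) (ht : IsOpen t) (hs : s ∈ t)
    (hderiv : ∀ s σ, HasDerivAt (F · σ) (F' s σ) s) (hGs : IsSmooth G) (hK : N + 2 ≤ K) :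
    HasDerivAt (fun s => oscPairing K (F s) (G s))
      (oscPairing K (F' s) (G s) + oscPairing K (F s) (∂₁ G s)) s := by
  obtain ⟨C, -, hC⟩ := hF'.norm_oscPairing_integrand_le hG hK
  obtain ⟨D, -, hD⟩ := hF.norm_oscPairing_integrand_le hG' hK
  have hint₁ := (hF'.hasGrowth ⟨s, hs⟩).integrable_oscPairing (hG.hasGrowth ⟨s, hs⟩) hK
  have hint₂ := (hF.hasGrowth ⟨s, hs⟩).integrable_oscPairing (hG'.hasGrowth ⟨s, hs⟩) hK
  have hderivFT (r : ℝ) (hr : r ∈ t) (y : ℝ) := HasGrowthOn.hasDerivAt_FT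
    (F := fun s σ => F s σ * decayWeight K σ) (hF.mul_decayWeight hK) (hF'.mul_decayWeight hK)
    ht hr (fun r σ => (hderiv r σ).mul_const _) y
  have hmem := ht.mem_nhds hs
  have hintegral := (hasDerivAt_integral_of_dominated_loc_of_deriv_le hmem
    (bound := fun y => C * (1 * 1) * (1 + |y|) ^ (-2 : ℤ) + D * (1 * 1) * (1 + |y|) ^ (-2 : ℤ))
    (eventually_of_mem hmem fun r hr => ((hF.hasGrowth ⟨r, hr⟩).integrable_oscPairing
      (hG.hasGrowth ⟨r, hr⟩) hK).aestronglyMeasurable)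
    ((hF.hasGrowth ⟨s, hs⟩).integrable_oscPairing (hG.hasGrowth ⟨s, hs⟩) hK)
    (hint₁.add hint₂).aestronglyMeasurable
    (ae_of_all _ fun y r hr => (norm_add_le _ _).trans (add_le_add (hC ⟨r, hr⟩ y) (hD ⟨r, hr⟩ y)))
    ((integrable_one_add_abs_zpow.const_mul _).add (integrable_one_add_abs_zpow.const_mul _))
    (ae_of_all _ fun y r hr =>
      (hderivFT r hr y).mul (hGs.hasDerivAt_iterate_oneAddDeriv K r y))).2
  refine (hintegral.const_mul _).congr_deriv ?_
  rw [integral_add hint₁ hint₂, mul_add, oscPairing, oscPairing]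

lemma HasGrowthOn.hasDerivAt_oscPairing_left {g : ℝ → ℂ} (hF : HasGrowthOn N t F)
    (hF' : HasGrowthOn N t F') (hg : HasGrowth N' g) (ht : IsOpen t) (hs : s ∈ t)
    (hderiv : ∀ s σ, HasDerivAt (F · σ) (F' s σ) s) (hK : N + 2 ≤ K) :
    HasDerivAt (fun s => oscPairing K (F s) g) (oscPairing K (F' s) g) s := by
  have hG : HasGrowthOn N' t fun _ => g := hg.reindex fun _ => ()
  have hsmooth : IsSmooth fun _ => g := (hg.contDiff ()).comp contDiff_snd
  have hzero : ∂₁ (fun _ => g) = fun _ _ => 0 := by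
    funext s y
    exact (hsmooth.hasDerivAt_left s y).unique (hasDerivAt_const s _)
  have hG' : HasGrowthOn N' t (∂₁ fun _ => g) := by
    simpa [hzero] using (hG.const_mul fun _ => 0).mono_weight zero_le_one (w' := fun _ => 1)
  have hvanish : oscPairing K (F s) (fun _ => 0) = 0 := by
    simpa using oscPairing_const_mul_right K 0 (F s) fun _ => 0
  have hpair := hF.hasDerivAt_oscPairing hF' hG hG' ht hs hderiv hsmooth hK
  simpa only [hzero, hvanish, add_zero] using hpair

end Parameter

/-! ### Composition of symbols -/

section Composition

variable {ι : Type*} {m m₁ m₂ : ℝ → ℝ → ℝ} {N N₁ N₂ K : ℕ} {f g : ι → ℝ → ℝ → ℂ}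
  {a : ℝ → ℝ → ℂ}

/-- A positive weight of polynomial growth with exponent `N`; an order function with its
exponent made explicit and without its smoothness. -/
def IsTemperate (m : ℝ → ℝ → ℝ) (N : ℕ) : Prop :=
  (∀ x ξ, 0 < m x ξ) ∧ ∃ C : ℝ, 0 ≤ C ∧ ∀ x ξ y η : ℝ,
    m x ξ ≤ C * (1 + |x - y| + |ξ - η|) ^ N * m y η

/-- The restriction of `a` to the line through `p` with velocity `v`. -/
def onLine (a : ℝ → ℝ → ℂ) (p v : ℝ × ℝ) (σ : ℝ) : ℂ := a (p.1 + σ * v.1) (p.2 + σ * v.2)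

/-- The symbol of `Op t f ∘ Op t g`, that is `(2π)⁻¹ ∬ e^{-iyσ} f(x, ζ + tσ) g(x + y, ζ) dy dσ`. -/
def compSymbol (K : ℕ) (t : ℝ) (f g : ℝ → ℝ → ℂ) (x ζ : ℝ) : ℂ :=
  oscPairing K (onLine f (x, ζ) (0, t)) (onLine g (x, ζ) (1, 0))

lemma onLine_vertical (a : ℝ → ℝ → ℂ) (x ξ t : ℝ) :
    onLine a (x, ξ) (0, t) = fun σ => a x (ξ + t * σ) := by
  funext σ
  simp [onLine, mul_comm]

lemma onLine_horizontal (a : ℝ → ℝ → ℂ) (x ξ : ℝ) :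
    onLine a (x, ξ) (1, 0) = fun y => a (x + y) ξ := by
  funext y
  simp [onLine]

namespace IsTemperate

lemma le (hm : IsTemperate m N) :
    ∃ C : ℝ, 0 ≤ C ∧ ∀ p q : ℝ × ℝ, m q.1 q.2 ≤ C * (1 + ‖q - p‖) ^ N * m p.1 p.2 := by
  obtain ⟨hpos, C, hC, hbdd⟩ := hm
  refine ⟨C * 2 ^ N, by positivity, fun p q => (hbdd q.1 q.2 p.1 p.2).trans ?_⟩
  rw [mul_assoc C (2 ^ N), ← mul_pow]
  have hfst : |q.1 - p.1| ≤ ‖q - p‖ := norm_fst_le (q - p)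
  have hsnd : |q.2 - p.2| ≤ ‖q - p‖ := norm_snd_le (q - p)
  have := (hpos p.1 p.2).le
  gcongr
  linarith

lemma exists_bound (hm : IsTemperate m N) (p : ℝ × ℝ) (R : ℝ) :
    ∃ D : ℝ, 0 ≤ D ∧ ∀ q : ℝ × ℝ, ‖q - p‖ ≤ R → m q.1 q.2 ≤ D := by
  obtain ⟨C, hC, hle⟩ := hm.le
  have hpos := (hm.1 p.1 p.2).le
  refine ⟨C * (1 + |R|) ^ N * m p.1 p.2, by positivity, fun q hq => (hle p q).trans ?_⟩
  gcongr
  exact hq.trans (le_abs_self R)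

lemma mul (h₁ : IsTemperate m₁ N₁) (h₂ : IsTemperate m₂ N₂) :
    IsTemperate (fun x ζ => m₁ x ζ * m₂ x ζ) (N₁ + N₂) := by
  obtain ⟨hpos₁, C₁, hC₁, hle₁⟩ := h₁
  obtain ⟨hpos₂, C₂, hC₂, hle₂⟩ := h₂
  refine ⟨fun x ξ => mul_pos (hpos₁ _ _) (hpos₂ _ _), C₁ * C₂, by positivity, fun x ξ y η => ?_⟩
  have := (hpos₁ y η).le
  calc m₁ x ξ * m₂ x ξ
      ≤ (C₁ * (1 + |x - y| + |ξ - η|) ^ N₁ * m₁ y η) *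
          (C₂ * (1 + |x - y| + |ξ - η|) ^ N₂ * m₂ y η) :=
        mul_le_mul (hle₁ x ξ y η) (hle₂ x ξ y η) (hpos₂ _ _).le (by positivity)
    _ = _ := by
        rw [pow_add]
        ring

end IsTemperate

lemma IsSymbol.iterate_dirDeriv_family {v : ι → ℝ × ℝ} {R : ℝ} (hf : IsSymbol m f)
    (hv : ∀ i, ‖v i‖ ≤ R) (n : ℕ) : IsSymbol m fun i => (dirDeriv (v i))^[n] (f i) := by
  induction n generalizing f with
  | zero => exact hf
  | succ _ ih =>
    refine ih (f := fun i => dirDeriv (v i) (f i)) ?_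
    simp_rw [fun i => dirDeriv_eq (v i) (f i)]
    have hnorm (r : ℝ) : ‖(r : ℂ)‖ = ‖r‖ := Complex.norm_real r
    exact ((hf.dirDeriv (1, 0)).const_mul (c := fun i => ((v i).1 : ℂ)) fun i =>
      (hnorm _).trans_le ((norm_fst_le (v i)).trans (hv i))).add
      ((hf.dirDeriv (0, 1)).const_mul (c := fun i => ((v i).2 : ℂ)) fun i =>
        (hnorm _).trans_le ((norm_snd_le (v i)).trans (hv i)))

namespace IsSmooth

lemma contDiff_onLine (ha : IsSmooth a) (p v : ℝ × ℝ) : ContDiff ℝ ∞ (onLine a p v) := by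
  refine ContDiff.comp (g := fun q : ℝ × ℝ => a q.1 q.2)
    (f := fun σ : ℝ => (p.1 + σ * v.1, p.2 + σ * v.2)) ha ?_
  fun_prop

lemma hasDerivAt_onLine (ha : IsSmooth a) (p v : ℝ × ℝ) (σ : ℝ) :
    HasDerivAt (onLine a p v) (onLine (dirDeriv v a) p v σ) σ :=
  ha.hasDerivAt_line p.1 p.2 v σ

lemma iteratedDeriv_onLine (ha : IsSmooth a) (p v : ℝ × ℝ) (n : ℕ) :
    iteratedDeriv n (onLine a p v) = onLine ((dirDeriv v)^[n] a) p v := by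
  induction n generalizing a with
  | zero => simp
  | succ _ ih =>
    rw [iteratedDeriv_succ', funext fun σ => (ha.hasDerivAt_onLine p v σ).deriv,
      ih (ha.dirDeriv v), Function.iterate_succ_apply]

lemma onLine_translate (ha : IsSmooth a) (p u v : ℝ × ℝ) :
    IsSmooth fun s => onLine a (p + s • u) v := by
  refine ContDiff.comp (g := fun q : ℝ × ℝ => a q.1 q.2)
    (f := fun q : ℝ × ℝ => ((p + q.1 • u).1 + q.2 * v.1, (p + q.1 • u).2 + q.2 * v.2)) ha ?_
  fun_prop

lemma hasDerivAt_onLine_translate (ha : IsSmooth a) (p u v : ℝ × ℝ) (s σ : ℝ) :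
    HasDerivAt (fun s => onLine a (p + s • u) v σ) (onLine (dirDeriv u a) (p + s • u) v σ) s := by
  simpa [onLine, add_right_comm] using
    ha.hasDerivAt_line (p.1 + σ * v.1) (p.2 + σ * v.2) u s

lemma hasDerivAt_onLine_smul (ha : IsSmooth a) (p u : ℝ × ℝ) (s σ : ℝ) :
    HasDerivAt (fun s => onLine a p (s • u) σ) (σ * onLine (dirDeriv u a) p (s • u) σ) s := by
  have hscaled := ha.hasDerivAt_line p.1 p.2 u (σ * s)
  simpa [onLine, mul_assoc, Function.comp_def] using hscaled.scomp s ((hasDerivAt_id s).const_mul σ)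

lemma dirDeriv_onLine_translate (ha : IsSmooth a) (p u v : ℝ × ℝ) :
    ∂₁ (fun s => onLine a (p + s • u) v) = fun s => onLine (dirDeriv u a) (p + s • u) v := by
  funext s σ
  exact ((ha.onLine_translate p u v).hasDerivAt_left s σ).unique
    (ha.hasDerivAt_onLine_translate p u v s σ)

end IsSmooth

lemma IsSymbol.uniformGrowth_onLine (hf : IsSymbol m f) (hm : IsTemperate m N) {R : ℝ}
    {p v : ι → ℝ × ℝ} (hv : ∀ i, ‖v i‖ ≤ R) :
    UniformGrowth N (fun i => m (p i).1 (p i).2) fun i => onLine (f i) (p i) (v i) := by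
  refine ⟨fun i => (hf.1 i).contDiff_onLine _ _, fun k => ?_⟩
  obtain ⟨C, hC, hbdd⟩ := (hf.iterate_dirDeriv_family hv k).isBoundedBy
  obtain ⟨D, hD, hle⟩ := hm.le
  refine ⟨C * D * (1 + |R|) ^ N, by positivity, fun i σ => ?_⟩
  rw [(hf.1 i).iteratedDeriv_onLine, zpow_natCast]
  have hpos := (hm.1 (p i).1 (p i).2).le
  have hgrow : 1 + ‖p i + σ • v i - p i‖ ≤ (1 + |R|) * (1 + |σ|) := by
    rw [add_sub_cancel_left, norm_smul, Real.norm_eq_abs]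
    nlinarith [abs_nonneg σ, abs_nonneg R,
      mul_le_mul_of_nonneg_left ((hv i).trans (le_abs_self R)) (abs_nonneg σ)]
  calc ‖onLine ((dirDeriv (v i))^[k] (f i)) (p i) (v i) σ‖
      ≤ C * m ((p i).1 + σ * (v i).1) ((p i).2 + σ * (v i).2) := hbdd i _ _
    _ ≤ C * (D * ((1 + |R|) * (1 + |σ|)) ^ N * m (p i).1 (p i).2) := by
        refine mul_le_mul_of_nonneg_left ((hle (p i) (p i + σ • v i)).trans ?_) hC
        gcongr
    _ = _ := by
        rw [mul_pow]
        ring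

lemma IsSymbol.hasGrowthOn_onLine (hf : IsSymbol m f) (hm : IsTemperate m N) (i : ι)
    {p v : ℝ → ℝ × ℝ} {t : Set ℝ} {p₀ : ℝ × ℝ} {R R' : ℝ} (hp : ∀ s ∈ t, ‖p s - p₀‖ ≤ R)
    (hv : ∀ s ∈ t, ‖v s‖ ≤ R') : HasGrowthOn N t fun s => onLine (f i) (p s) (v s) := by
  obtain ⟨D, hD, hle⟩ := hm.exists_bound p₀ R
  exact ((hf.reindex fun _ : t => i).uniformGrowth_onLine hm fun s => hv s s.2).mono_weight hD
    fun s => by simpa using hle _ (hp s s.2)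

lemma hasDerivAt_compSymbol_line (hf : IsSymbol m₁ f) (hm₁ : IsTemperate m₁ N₁)
    (hg : IsSymbol m₂ g) (hm₂ : IsTemperate m₂ N₂) (hK : N₁ + 2 ≤ K) (t : ℝ) (i : ι)
    (p u : ℝ × ℝ) (s : ℝ) :
    HasDerivAt (fun s => onLine (compSymbol K t (f i) (g i)) p u s)
      (onLine (compSymbol K t (dirDeriv u (f i)) (g i)) p u s +
        onLine (compSymbol K t (f i) (dirDeriv u (g i))) p u s) s := by
  have hnear : ∀ r ∈ Metric.ball s 1, ‖p + r • u - (p + s • u)‖ ≤ ‖u‖ := fun r hr => by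
    rw [add_sub_add_left_eq_sub, ← sub_smul, norm_smul]
    exact mul_le_of_le_one_left (norm_nonneg _) (Metric.mem_ball.1 hr).le
  have hF {b : ι → ℝ → ℝ → ℂ} (hb : IsSymbol m₁ b) :=
    hb.hasGrowthOn_onLine hm₁ i (v := fun _ => (0, t)) hnear fun _ _ => le_rfl
  have hG {b : ι → ℝ → ℝ → ℂ} (hb : IsSymbol m₂ b) :=
    hb.hasGrowthOn_onLine hm₂ i (v := fun _ => (1, 0)) hnear fun _ _ => le_rfl
  have hsmooth := (hg.1 i).onLine_translate p u (1, 0)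
  have hderivG := (hg.1 i).dirDeriv_onLine_translate p u (1, 0)
  have hpair := HasGrowthOn.hasDerivAt_oscPairing (K := K) (hF hf) (hF (hf.dirDeriv u)) (hG hg)
    (by simpa only [hderivG] using hG (hg.dirDeriv u)) Metric.isOpen_ball
    (Metric.mem_ball_self one_pos)
    (fun r σ => (hf.1 i).hasDerivAt_onLine_translate p u (0, t) r σ) hsmooth (by omega)
  rw [hderivG] at hpair
  exact hpair

lemma hasDerivAt_compSymbol_param (hf : IsSymbol m₁ f) (hm₁ : IsTemperate m₁ N₁)
    (hg : IsSymbol m₂ g) (hm₂ : IsTemperate m₂ N₂) (hK : N₁ + 4 ≤ K) (t : ℝ) (i : ι)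
    (x ζ : ℝ) :
    HasDerivAt (fun t => compSymbol K t (f i) (g i) x ζ)
      (-Complex.I * compSymbol K t (∂₂ (f i)) (∂₁ (g i)) x ζ) t := by
  have hF {b : ι → ℝ → ℝ → ℂ} (hb : IsSymbol m₁ b) :
      HasGrowthOn N₁ (Metric.ball t 1) fun s => onLine (b i) (x, ζ) (s • (0, 1)) := by
    refine hb.hasGrowthOn_onLine hm₁ i (p₀ := (x, ζ)) (R := 0) (R' := |t| + 1) (by simp) ?_
    intro s hs
    have hdist : |s - t| < 1 := hs
    have hnorm : ‖s • ((0, 1) : ℝ × ℝ)‖ = |s| := by simp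
    linarith [abs_sub_abs_le_abs_sub s t]
  have hG {b : ι → ℝ → ℝ → ℂ} (hb : IsSymbol m₂ b) : HasGrowth N₂ (onLine (b i) (x, ζ) (1, 0)) :=
    (hb.uniformGrowth_onLine hm₂ (p := fun _ => (x, ζ)) (v := fun _ => (1, 0))
      fun _ => le_rfl).hasGrowth i
  have hF' : HasGrowthOn (1 + N₁) (Metric.ball t 1) fun s σ =>
      (σ : ℂ) * onLine (∂₂ (f i)) (x, ζ) (s • (0, 1)) σ := by
    simpa using (HasGrowth.ofReal.reindex fun _ : Metric.ball t 1 => ()).mul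
      (hF (hf.dirDeriv (0, 1)))
  have hpair := HasGrowthOn.hasDerivAt_oscPairing_left (N := 1 + N₁) (K := K)
    ((hF hf).mono_exponent (by omega)) hF' (hG hg)
    Metric.isOpen_ball (Metric.mem_ball_self one_pos)
    (fun s σ => (hf.1 i).hasDerivAt_onLine_smul (x, ζ) (0, 1) s σ) (by omega)
  have hparts := ((hF (hf.dirDeriv (0, 1))).hasGrowth
    ⟨t, Metric.mem_ball_self one_pos⟩).oscPairing_I_mul (K := K) (hG hg) (by omega)
  simp only [mul_assoc, oscPairing_const_mul_left,
    funext fun y => ((hg.1 i).hasDerivAt_onLine (x, ζ) (1, 0) y).deriv] at hparts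
  have hvel (s : ℝ) : s • ((0, 1) : ℝ × ℝ) = (0, s) := by simp
  simp only [hvel] at hpair hparts
  refine HasDerivAt.congr_deriv hpair ?_
  rw [compSymbol, ← hparts, ← mul_assoc, neg_mul, Complex.I_mul_I, neg_neg, one_mul]

lemma compSymbol_zero (hg : IsSymbol m₂ g) (hm₂ : IsTemperate m₂ N₂) (hK : 2 ≤ K) (i : ι)
    (b : ℝ → ℝ → ℂ) : compSymbol K 0 b (g i) = fun x ζ => b x ζ * g i x ζ := by
  funext x ζ
  have hgrowth := (hg.uniformGrowth_onLine hm₂ (p := fun _ => (x, ζ)) (v := fun _ => (1, 0))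
    fun _ => le_rfl).hasGrowth i
  have hconst : onLine b (x, ζ) (0, 0) = fun _ => b x ζ := by
    funext σ
    simp [onLine]
  simpa [onLine, compSymbol, hconst] using HasGrowth.oscPairing_const (b x ζ) hgrowth hK

lemma isBoundedBy_compSymbol (hf : IsSymbol m₁ f) (hm₁ : IsTemperate m₁ N₁)
    (hg : IsSymbol m₂ g) (hm₂ : IsTemperate m₂ N₂) (hK : N₁ + 2 ≤ K) {t : ι → ℝ} {R : ℝ}
    (ht : ∀ i, |t i| ≤ R) :
    IsBoundedBy (fun x ζ => m₁ x ζ * m₂ x ζ) fun i => compSymbol K (t i) (f i) (g i) := by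
  have hF := (hf.reindex fun j : ι × ℝ × ℝ => j.1).uniformGrowth_onLine hm₁
    (p := fun j => j.2) (v := fun j => (0, t j.1)) (R := R) fun j => by simpa using ht j.1
  have hG := (hg.reindex fun j : ι × ℝ × ℝ => j.1).uniformGrowth_onLine hm₂
    (p := fun j => j.2) (v := fun _ => (1, 0)) fun _ => le_rfl
  obtain ⟨C, hC, hbdd⟩ := hF.norm_oscPairing_le hG (K := K) (by omega)
  exact ⟨C, hC, fun i x ζ => hbdd (i, x, ζ)⟩

end Composition

/-! ### Regularity from partial derivatives, Taylor's formula -/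

lemma continuous_of_hasDerivAt_left {E Y : Type*} [NormedAddCommGroup E] [NormedSpace ℝ E]
    [TopologicalSpace Y] {u ux : ℝ → Y → E}
    (hleft : ∀ x y, HasDerivAt (fun x => u x y) (ux x y) x) (hright : ∀ x, Continuous (u x))
    (hbdd : ∀ x₀ y₀, ∃ D : ℝ, ∀ᶠ y in 𝓝 y₀, ∀ x ∈ Metric.closedBall x₀ 1, ‖ux x y‖ ≤ D) :
    Continuous fun q : ℝ × Y => u q.1 q.2 := by
  refine continuous_iff_continuousAt.2 fun ⟨x₀, y₀⟩ => ?_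
  obtain ⟨D, hD⟩ := hbdd x₀ y₀
  have hincrement : Tendsto (fun q : ℝ × Y => u q.1 q.2 - u x₀ q.2) (𝓝 (x₀, y₀)) (𝓝 0) := by
    refine squeeze_zero_norm' (a := fun q : ℝ × Y => D * ‖q.1 - x₀‖) ?_ ?_
    · filter_upwards [continuous_snd.tendsto (x₀, y₀) hD,
        continuous_fst.tendsto (x₀, y₀) (Metric.closedBall_mem_nhds x₀ one_pos)] with q hq hball
      exact (convex_closedBall x₀ 1).norm_image_sub_le_of_norm_hasDerivWithin_le
        (f := fun x => u x q.2) (fun x _ => (hleft x q.2).hasDerivWithinAt) hq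
        (Metric.mem_closedBall_self zero_le_one) hball
    · have hcont : Continuous fun q : ℝ × Y => D * ‖q.1 - x₀‖ := by fun_prop
      simpa using hcont.tendsto (x₀, y₀)
  have hbase : Tendsto (fun q : ℝ × Y => u x₀ q.2) (𝓝 (x₀, y₀)) (𝓝 (u x₀ y₀)) :=
    ((hright x₀).tendsto y₀).comp (continuous_snd.tendsto (x₀, y₀))
  simpa [ContinuousAt] using hincrement.add hbase

lemma contDiff_succ_of_hasDerivAt_partials {E : Type*} [NormedAddCommGroup E] [NormedSpace ℝ E]
    {n : ℕ} {u ux uy : ℝ → ℝ → E} (hleft : ∀ x y, HasDerivAt (fun x => u x y) (ux x y) x)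
    (hright : ∀ x y, HasDerivAt (u x) (uy x y) y)
    (hux : ContDiff ℝ n fun q : ℝ × ℝ => ux q.1 q.2)
    (huy : ContDiff ℝ n fun q : ℝ × ℝ => uy q.1 q.2) :
    ContDiff ℝ (n + 1) fun q : ℝ × ℝ => u q.1 q.2 := by
  let T : E →L[ℝ] (ℝ →L[ℝ] E) := ContinuousLinearMap.smulRightL ℝ ℝ E 1
  have hT {φ : ℝ → E} {c : E} {x : ℝ} (hφ : HasDerivAt φ c x) : HasFDerivAt φ (T c) x := by
    have hspan : T c = ContinuousLinearMap.toSpanSingleton ℝ c := by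
      ext
      simp [T]
    rw [hspan]
    exact hφ.hasFDerivAt
  refine contDiff_succ_iff_hasFDerivAt.2
    ⟨fun q => (T (ux q.1 q.2)).comp (.fst ℝ ℝ ℝ) + (T (uy q.1 q.2)).comp (.snd ℝ ℝ ℝ),
      ((T.contDiff.comp hux).clm_comp contDiff_const).add
        ((T.contDiff.comp huy).clm_comp contDiff_const), fun q => ?_⟩
  have hstrict := hasStrictFDerivAt_uncurry_coprod (𝕜 := ℝ) (u := q) (f := u)
    (f₁ := fun x y => T (ux x y)) (f₂ := fun x y => T (uy x y))
    (Eventually.of_forall fun v => hT (hleft v.1 v.2))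
    (Eventually.of_forall fun v => hT (hright v.1 v.2))
    (T.continuous.comp hux.continuous).continuousAt
    (T.continuous.comp huy.continuous).continuousAt
  exact hstrict.hasFDerivAt.congr_fderiv
    (ContinuousLinearMap.comp_fst_add_comp_snd (T (ux q.1 q.2)) (T (uy q.1 q.2))).symm

lemma iteratedDeriv_eq_of_hasDerivAt_succ {E : Type*} [NormedAddCommGroup E] [NormedSpace ℝ E]
    {φ : ℕ → ℝ → E} (hφ : ∀ k t, HasDerivAt (φ k) (φ (k + 1) t) t) (k : ℕ) :
    iteratedDeriv k (φ 0) = φ k := by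
  induction k with
  | zero => exact iteratedDeriv_zero
  | succ k ih => rw [iteratedDeriv_succ, ih, funext fun t => (hφ k t).deriv]

lemma norm_sub_taylor_sum_le {E : Type*} [NormedAddCommGroup E] [NormedSpace ℝ E]
    {φ : ℕ → ℝ → E} (hφ : ∀ k t, HasDerivAt (φ k) (φ (k + 1) t) t) (M : ℕ) {C : ℝ}
    (hC : ∀ s ∈ Set.Icc (0 : ℝ) 1, ‖φ M s‖ ≤ C) {t : ℝ} (ht : t ∈ Set.Icc (0 : ℝ) 1) :
    ‖φ 0 t - ∑ k ∈ Finset.range M, (t ^ k / k.factorial) • φ k 0‖ ≤ C * t ^ M := by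
  obtain _ | n := M
  · simpa using hC t ht
  have hsmooth : ContDiff ℝ ∞ (φ 0) := contDiff_of_differentiable_iteratedDeriv fun k _ => by
    rw [iteratedDeriv_eq_of_hasDerivAt_succ hφ]
    exact fun s => (hφ k s).differentiableAt
  have hwithin (k : ℕ) {s : ℝ} (hs : s ∈ Set.Icc (0 : ℝ) 1) :
      iteratedDerivWithin k (φ 0) (Set.Icc 0 1) s = φ k s := by
    rw [iteratedDerivWithin_eq_iteratedDeriv (uniqueDiffOn_Icc one_pos)
      (contDiff_infty.1 hsmooth k).contDiffAt hs, iteratedDeriv_eq_of_hasDerivAt_succ hφ]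
  have htaylor := taylor_mean_remainder_bound zero_le_one (n := n)
    (hsmooth.of_le (by exact_mod_cast le_top)).contDiffOn ht
    fun s hs => (hwithin (n + 1) hs).symm ▸ hC s hs
  rw [taylor_within_apply, sub_zero] at htaylor
  have hsum : ∑ k ∈ Finset.range (n + 1), (t ^ k / k.factorial) • φ k 0 =
      ∑ k ∈ Finset.range (n + 1), ((k.factorial : ℝ)⁻¹ * t ^ k) •
        iteratedDerivWithin k (φ 0) (Set.Icc 0 1) 0 :=
    Finset.sum_congr rfl fun k _ => by
      rw [hwithin k (Set.left_mem_Icc.2 zero_le_one), div_eq_inv_mul]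
  rw [hsum]
  have hC₀ : 0 ≤ C := (norm_nonneg _).trans (hC t ht)
  have ht₀ := ht.1
  exact htaylor.trans (div_le_self (by positivity) (by exact_mod_cast n.factorial_pos))

/-! ### The asymptotic expansion of the composed symbol -/

section Expansion

variable {ι : Type*} {m₁ m₂ : ℝ → ℝ → ℝ} {N₁ N₂ K : ℕ} {f g : ι → ℝ → ℝ → ℂ} {b c : ℝ → ℝ → ℂ}

/-- The Taylor polynomial in `t` of `compSymbol K t f g`, with the terms of order `< M`. -/
def compExpansion (M : ℕ) (t : ℝ) (f g : ℝ → ℝ → ℂ) (x ζ : ℝ) : ℂ :=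
  ∑ k ∈ Finset.range M, (-Complex.I * t) ^ k / k.factorial * (∂₂^[k] f x ζ * ∂₁^[k] g x ζ)

/-- The remainder of order `M` of `compSymbol K t f g`, divided by `t ^ M`. -/
def compRemainder (K M : ℕ) (t : ℝ) (f g : ℝ → ℝ → ℂ) (x ζ : ℝ) : ℂ :=
  ((t : ℂ) ^ M)⁻¹ * (compSymbol K t f g x ζ - compExpansion M t f g x ζ)

lemma compSymbol_eq_expansion_add_remainder (K M : ℕ) {t : ℝ} (ht : t ≠ 0) (b c : ℝ → ℝ → ℂ)
    (x ζ : ℝ) :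
    compSymbol K t b c x ζ =
      compExpansion M t b c x ζ + (t : ℂ) ^ M * compRemainder K M t b c x ζ := by
  rw [compRemainder, mul_inv_cancel_left₀ (pow_ne_zero M (by exact_mod_cast ht)),
    add_sub_cancel]

namespace IsSmooth

protected lemma compExpansion (hb : IsSmooth b) (hc : IsSmooth c) (M : ℕ) (t : ℝ) :
    IsSmooth (compExpansion M t b c) :=
  ContDiff.sum fun k _ => contDiff_const.mul
    ((hb.iterate_dirDeriv (0, 1) k).mul (hc.iterate_dirDeriv (1, 0) k))

lemma hasDerivAt_compExpansion_line (hb : IsSmooth b) (hc : IsSmooth c) (M : ℕ) (t : ℝ)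
    (p u : ℝ × ℝ) (s : ℝ) :
    HasDerivAt (onLine (compExpansion M t b c) p u)
      (onLine (compExpansion M t (dirDeriv u b) c) p u s +
        onLine (compExpansion M t b (dirDeriv u c)) p u s) s := by
  unfold onLine compExpansion
  rw [← Finset.sum_add_distrib]
  refine HasDerivAt.fun_sum fun k _ => ?_
  have hderiv := (((hb.iterate_dirDeriv (0, 1) k).hasDerivAt_onLine p u s).mul
    ((hc.iterate_dirDeriv (1, 0) k).hasDerivAt_onLine p u s)).const_mul
    ((-Complex.I * t) ^ k / k.factorial)
  rw [hb.dirDeriv_iterate_comm, hc.dirDeriv_iterate_comm, mul_add] at hderiv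
  exact hderiv

end IsSmooth

lemma hasDerivAt_compSymbol_left (hf : IsSymbol m₁ f) (hm₁ : IsTemperate m₁ N₁)
    (hg : IsSymbol m₂ g) (hm₂ : IsTemperate m₂ N₂) (hK : N₁ + 2 ≤ K) (t : ℝ) (i : ι)
    (x ζ : ℝ) :
    HasDerivAt (fun x => compSymbol K t (f i) (g i) x ζ)
      (compSymbol K t (∂₁ (f i)) (g i) x ζ + compSymbol K t (f i) (∂₁ (g i)) x ζ) x := by
  simpa [onLine] using hasDerivAt_compSymbol_line hf hm₁ hg hm₂ hK t i (0, ζ) (1, 0) x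

lemma hasDerivAt_compSymbol_right (hf : IsSymbol m₁ f) (hm₁ : IsTemperate m₁ N₁)
    (hg : IsSymbol m₂ g) (hm₂ : IsTemperate m₂ N₂) (hK : N₁ + 2 ≤ K) (t : ℝ) (i : ι)
    (x ζ : ℝ) :
    HasDerivAt (compSymbol K t (f i) (g i) x)
      (compSymbol K t (∂₂ (f i)) (g i) x ζ + compSymbol K t (f i) (∂₂ (g i)) x ζ) ζ := by
  simpa [onLine] using hasDerivAt_compSymbol_line hf hm₁ hg hm₂ hK t i (x, 0) (0, 1) ζ

lemma continuous_compSymbol (hf : IsSymbol m₁ f) (hm₁ : IsTemperate m₁ N₁)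
    (hg : IsSymbol m₂ g) (hm₂ : IsTemperate m₂ N₂) (hK : N₁ + 2 ≤ K) (t : ℝ) (i : ι) :
    Continuous fun q : ℝ × ℝ => compSymbol K t (f i) (g i) q.1 q.2 := by
  refine continuous_of_hasDerivAt_left (hasDerivAt_compSymbol_left hf hm₁ hg hm₂ hK t i)
    (fun x => continuous_iff_continuousAt.2 fun ζ =>
      (hasDerivAt_compSymbol_right hf hm₁ hg hm₂ hK t i x ζ).continuousAt) fun x₀ ζ₀ => ?_
  obtain ⟨C, hC, hbdd⟩ := (isBoundedBy_compSymbol (hf.dirDeriv (1, 0)) hm₁ hg hm₂ hK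
    (t := fun _ => t) fun _ => le_rfl).add
    (isBoundedBy_compSymbol hf hm₁ (hg.dirDeriv (1, 0)) hm₂ hK fun _ => le_rfl)
  obtain ⟨D, -, hle⟩ := (hm₁.mul hm₂).exists_bound (x₀, ζ₀) 1
  refine ⟨C * D, ?_⟩
  filter_upwards [Metric.closedBall_mem_nhds ζ₀ one_pos] with ζ hζ x hx
  have hnear : ‖((x, ζ) : ℝ × ℝ) - (x₀, ζ₀)‖ ≤ 1 := max_le hx hζ
  exact (hbdd i x ζ).trans (mul_le_mul_of_nonneg_left (hle (x, ζ) hnear) hC)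

lemma isSmooth_compSymbol (hf : IsSymbol m₁ f) (hm₁ : IsTemperate m₁ N₁)
    (hg : IsSymbol m₂ g) (hm₂ : IsTemperate m₂ N₂) (hK : N₁ + 2 ≤ K) (t : ℝ) (i : ι) :
    IsSmooth (compSymbol K t (f i) (g i)) := by
  refine contDiff_infty.2 fun n => ?_
  induction n generalizing f g with
  | zero => exact contDiff_zero.2 (continuous_compSymbol hf hm₁ hg hm₂ hK t i)
  | succ n ih =>
    exact_mod_cast contDiff_succ_of_hasDerivAt_partials
      (hasDerivAt_compSymbol_left hf hm₁ hg hm₂ hK t i)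
      (hasDerivAt_compSymbol_right hf hm₁ hg hm₂ hK t i)
      ((ih (hf.dirDeriv (1, 0)) hg).add (ih hf (hg.dirDeriv (1, 0))))
      ((ih (hf.dirDeriv (0, 1)) hg).add (ih hf (hg.dirDeriv (0, 1))))

lemma isSmooth_compRemainder (hf : IsSymbol m₁ f) (hm₁ : IsTemperate m₁ N₁)
    (hg : IsSymbol m₂ g) (hm₂ : IsTemperate m₂ N₂) (hK : N₁ + 2 ≤ K) (M : ℕ) (t : ℝ) (i : ι) :
    IsSmooth (compRemainder K M t (f i) (g i)) :=
  contDiff_const.mul ((isSmooth_compSymbol hf hm₁ hg hm₂ hK t i).sub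
    ((hf.1 i).compExpansion (hg.1 i) M t))

lemma dirDeriv_compRemainder (hf : IsSymbol m₁ f) (hm₁ : IsTemperate m₁ N₁)
    (hg : IsSymbol m₂ g) (hm₂ : IsTemperate m₂ N₂) (hK : N₁ + 2 ≤ K) (M : ℕ) (t : ℝ) (i : ι)
    (u : ℝ × ℝ) :
    dirDeriv u (compRemainder K M t (f i) (g i)) = fun x ζ =>
      compRemainder K M t (dirDeriv u (f i)) (g i) x ζ +
        compRemainder K M t (f i) (dirDeriv u (g i)) x ζ := by
  funext x ζ
  have hderiv := ((hasDerivAt_compSymbol_line hf hm₁ hg hm₂ hK t i (x, ζ) u 0).sub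
    ((hf.1 i).hasDerivAt_compExpansion_line (hg.1 i) M t (x, ζ) u 0)).const_mul ((t : ℂ) ^ M)⁻¹
  have huniq := ((isSmooth_compRemainder hf hm₁ hg hm₂ hK M t i).hasDerivAt_onLine
    (x, ζ) u 0).unique hderiv
  simp only [onLine, zero_mul, add_zero] at huniq
  rw [huniq, compRemainder, compRemainder]
  ring

lemma isBoundedBy_compRemainder (hf : IsSymbol m₁ f) (hm₁ : IsTemperate m₁ N₁)
    (hg : IsSymbol m₂ g) (hm₂ : IsTemperate m₂ N₂) (hK : N₁ + 4 ≤ K) (M : ℕ) {t : ι → ℝ}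
    (ht : ∀ i, t i ∈ Set.Ioc 0 1) :
    IsBoundedBy (fun x ζ => m₁ x ζ * m₂ x ζ) fun i => compRemainder K M (t i) (f i) (g i) := by
  obtain ⟨C, hC, hbdd⟩ := isBoundedBy_compSymbol
    ((hf.iterate_dirDeriv (0, 1) M).reindex fun j : ι × Set.Icc (0 : ℝ) 1 => j.1) hm₁
    ((hg.iterate_dirDeriv (1, 0) M).reindex fun j => j.1) hm₂ (K := K) (by omega)
    (t := fun j => j.2) (R := 1) fun j => by
      rw [abs_of_nonneg j.2.2.1]
      exact j.2.2.2
  refine ⟨C, hC, fun i x ζ => ?_⟩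
  let φ (k : ℕ) (s : ℝ) : ℂ :=
    (-Complex.I) ^ k * compSymbol K s (∂₂^[k] (f i)) (∂₁^[k] (g i)) x ζ
  have hφ (k : ℕ) (s : ℝ) : HasDerivAt (φ k) (φ (k + 1) s) s := by
    refine ((hasDerivAt_compSymbol_param (hf.iterate_dirDeriv (0, 1) k) hm₁
      (hg.iterate_dirDeriv (1, 0) k) hm₂ hK s i x ζ).const_mul _).congr_deriv ?_
    simp only [φ, Function.iterate_succ_apply', pow_succ]
    ring
  have htaylor := norm_sub_taylor_sum_le hφ M (C := C * (m₁ x ζ * m₂ x ζ)) (fun s hs => by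
    simpa [φ] using hbdd (i, ⟨s, hs⟩) x ζ) (Set.Ioc_subset_Icc_self (ht i))
  have hexpansion : ∑ k ∈ Finset.range M, (t i ^ k / k.factorial) • φ k 0 =
      compExpansion M (t i) (f i) (g i) x ζ := by
    refine Finset.sum_congr rfl fun k _ => ?_
    have hzero := compSymbol_zero (hg.iterate_dirDeriv (1, 0) k) hm₂ (by omega : 2 ≤ K) i
    simp only [φ, hzero, mul_pow, Complex.real_smul]
    push_cast
    ring
  rw [hexpansion] at htaylor
  have hpow : 0 < t i ^ M := pow_pos (ht i).1 M
  simp only [compRemainder]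
  rw [norm_mul, norm_inv, norm_pow, Complex.norm_real,
    Real.norm_of_nonneg (ht i).1.le, inv_mul_le_iff₀ hpow, mul_comm (t i ^ M)]
  simpa [φ] using htaylor

theorem isSymbol_compRemainder (hf : IsSymbol m₁ f) (hm₁ : IsTemperate m₁ N₁)
    (hg : IsSymbol m₂ g) (hm₂ : IsTemperate m₂ N₂) (hK : N₁ + 4 ≤ K) (M : ℕ) {t : ι → ℝ}
    (ht : ∀ i, t i ∈ Set.Ioc 0 1) :
    IsSymbol (fun x ζ => m₁ x ζ * m₂ x ζ) fun i => compRemainder K M (t i) (f i) (g i) := by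
  have hsmooth {b c : ι → ℝ → ℝ → ℂ} (hb : IsSymbol m₁ b) (hc : IsSymbol m₂ c) (i : ι) :
      IsSmooth (compRemainder K M (t i) (b i) (c i)) :=
    isSmooth_compRemainder hb hm₁ hc hm₂ (by omega) M (t i) i
  refine ⟨hsmooth hf hg, fun n => ?_⟩
  induction n generalizing f g with
  | zero => exact isBoundedBy_compRemainder hf hm₁ hg hm₂ hK M ht
  | succ n ih =>
    refine ⟨isBoundedBy_compRemainder hf hm₁ hg hm₂ hK M ht, fun u => ?_⟩
    simp_rw [fun i => dirDeriv_compRemainder hf hm₁ hg hm₂ (by omega : N₁ + 2 ≤ K) M (t i) i u]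
    exact (ih (hf.dirDeriv u) hg).add (hsmooth (hf.dirDeriv u) hg) (hsmooth hf (hg.dirDeriv u))
      (ih hf (hg.dirDeriv u))

lemma isSymbol_compSymbol (hf : IsSymbol m₁ f) (hm₁ : IsTemperate m₁ N₁)
    (hg : IsSymbol m₂ g) (hm₂ : IsTemperate m₂ N₂) (hK : N₁ + 4 ≤ K) {t : ι → ℝ}
    (ht : ∀ i, t i ∈ Set.Ioc 0 1) :
    IsSymbol (fun x ζ => m₁ x ζ * m₂ x ζ) fun i => compSymbol K (t i) (f i) (g i) := by
  have horder : ∀ i, compRemainder K 0 (t i) (f i) (g i) = compSymbol K (t i) (f i) (g i) :=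
    fun i => by
      funext x ζ
      simp [compRemainder, compExpansion]
  simpa only [horder] using isSymbol_compRemainder hf hm₁ hg hm₂ hK 0 ht

end Expansion

/-! ### Superposition -/

section Superposition

variable {N : ℤ} {L K : ℕ} {f Φ : ℝ → ℂ} {E : ℝ → ℝ → ℂ}

lemma UniformGrowth.integrable_left
    (hgrowth : UniformGrowth N (fun ξ : ℝ => (1 + |ξ|) ^ (-2 : ℤ)) E)
    (hcont : Continuous fun p : ℝ × ℝ => E p.1 p.2) (y : ℝ) : Integrable fun ξ => E ξ y := by
  obtain ⟨C, -, hbdd⟩ := hgrowth.norm_le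
  refine integrable_of_norm_le (C := C * (1 + |y|) ^ N)
    (hcont.comp (continuous_id.prodMk continuous_const)) fun ξ => ?_
  rw [mul_right_comm]
  exact hbdd ξ y

lemma continuous_mul_family (hΦ : Continuous Φ) (hE : IsSmooth E) :
    Continuous fun p : ℝ × ℝ => Φ p.1 * E p.1 p.2 :=
  (hΦ.comp continuous_fst).mul (ContDiff.continuous hE)

lemma IsSmooth.iterate_oneAddDeriv (hE : IsSmooth E) (K : ℕ) :
    IsSmooth fun ξ => oneAddDeriv^[K] (E ξ) := by
  induction K generalizing E with
  | zero => exact hE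
  | succ K ih =>
    simp only [Function.iterate_succ_apply, hE.oneAddDeriv_eq]
    exact ih (hE.add (hE.dirDeriv (0, 1)))

lemma hasDerivAt_integral_mul (hΦ : Continuous Φ) (hE : IsSmooth E)
    (hgrowth : UniformGrowth L (fun ξ : ℝ => (1 + |ξ|) ^ (-2 : ℤ)) fun ξ y => Φ ξ * E ξ y)
    (y : ℝ) :
    HasDerivAt (fun y => ∫ ξ, Φ ξ * E ξ y) (∫ ξ, Φ ξ * ∂₂ E ξ y) y := by
  have hderiv (ξ y : ℝ) : HasDerivAt (fun y => Φ ξ * E ξ y) (Φ ξ * ∂₂ E ξ y) y :=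
    (hE.hasDerivAt_right ξ y).const_mul _
  obtain ⟨C, hC, hbdd⟩ := hgrowth.deriv.norm_le
  have hslice {E' : ℝ → ℝ → ℂ} (hE' : IsSmooth E') (y : ℝ) :
      AEStronglyMeasurable fun ξ => Φ ξ * E' ξ y :=
    ((continuous_mul_family hΦ hE').comp
      (continuous_id.prodMk continuous_const)).aestronglyMeasurable
  refine (hasDerivAt_integral_of_dominated_loc_of_deriv_le (F := fun y ξ => Φ ξ * E ξ y)
    (F' := fun y ξ => Φ ξ * ∂₂ E ξ y) (Metric.ball_mem_nhds y one_pos)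
    (bound := fun ξ => C * (2 + |y|) ^ L * (1 + |ξ|) ^ (-2 : ℤ))
    (Eventually.of_forall fun _ => hslice hE _)
    (hgrowth.integrable_left (continuous_mul_family hΦ hE) y) (hslice (hE.dirDeriv (0, 1)) y)
    (ae_of_all _ fun ξ r hr => ?_) (integrable_one_add_abs_zpow.const_mul _)
    (ae_of_all _ fun ξ r _ => hderiv ξ r)).2
  have hdist : |r - y| < 1 := hr
  have hnear : 1 + |r| ≤ 2 + |y| := by linarith [abs_sub_abs_le_abs_sub r y]
  rw [← (hderiv ξ r).deriv, mul_right_comm]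
  refine (hbdd ξ r).trans ?_
  rw [zpow_natCast]
  gcongr

lemma oneAddDeriv_iterate_integral_mul (hΦ : Continuous Φ) (hE : IsSmooth E)
    (hgrowth : UniformGrowth L (fun ξ : ℝ => (1 + |ξ|) ^ (-2 : ℤ)) fun ξ y => Φ ξ * E ξ y)
    (K : ℕ) : oneAddDeriv^[K] (fun y => ∫ ξ, Φ ξ * E ξ y) =
      fun y => ∫ ξ, Φ ξ * oneAddDeriv^[K] (E ξ) y := by
  induction K generalizing E with
  | zero => rfl
  | succ K ih =>
    have hgrowth' (c : ℕ) : UniformGrowth L (fun ξ : ℝ => (1 + |ξ|) ^ (-2 : ℤ))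
        fun ξ y => Φ ξ * oneAddDeriv^[c] (E ξ) y := by
      simpa only [oneAddDeriv_iterate_const_mul] using hgrowth.iterate_oneAddDeriv c
    have hderivGrowth : UniformGrowth L (fun ξ : ℝ => (1 + |ξ|) ^ (-2 : ℤ))
        fun ξ y => Φ ξ * ∂₂ E ξ y := by
      simpa only [fun ξ => funext fun y => ((hE.hasDerivAt_right ξ y).const_mul (Φ ξ)).deriv]
        using hgrowth.deriv
    have hone : oneAddDeriv (fun y => ∫ ξ, Φ ξ * E ξ y) =
        fun y => ∫ ξ, Φ ξ * oneAddDeriv (E ξ) y := by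
      funext y
      rw [oneAddDeriv, (hasDerivAt_integral_mul hΦ hE hgrowth y).deriv,
        ← integral_add (hgrowth.integrable_left (continuous_mul_family hΦ hE) y)
        (hderivGrowth.integrable_left (continuous_mul_family hΦ (hE.dirDeriv (0, 1))) y)]
      simp only [hE.oneAddDeriv_eq, mul_add]
    simp only [Function.iterate_succ_apply]
    rw [hone]
    exact ih (hE.iterate_oneAddDeriv 1) (hgrowth' 1)

lemma HasGrowth.oscPairing_integral_mul (hf : HasGrowth N f) (hΦ : Continuous Φ) (hE : IsSmooth E)
    (hgrowth : UniformGrowth L (fun ξ : ℝ => (1 + |ξ|) ^ (-2 : ℤ)) fun ξ y => Φ ξ * E ξ y)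
    (hK : N + 2 ≤ K) :
    oscPairing K f (fun y => ∫ ξ, Φ ξ * E ξ y) = ∫ ξ, Φ ξ * oscPairing K f (E ξ) := by
  let Θ := FT fun σ => f σ * decayWeight K σ
  have hΘ : Continuous Θ := continuous_FT (hf.integrable_mul_decayWeight hK)
  have hcont : Continuous fun p : ℝ × ℝ => Θ p.1 * (Φ p.2 * oneAddDeriv^[K] (E p.2) p.1) :=
    (hΘ.comp continuous_fst).mul
      ((continuous_mul_family hΦ (hE.iterate_oneAddDeriv K)).comp continuous_swap)
  obtain ⟨C, -, hbdd⟩ :=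
    UniformGrowth.norm_oscPairing_integrand_le (hf.reindex fun _ : ℝ => ()) hgrowth hK
  have hint : Integrable (fun p : ℝ × ℝ => Θ p.1 * (Φ p.2 * oneAddDeriv^[K] (E p.2) p.1))
      (volume.prod volume) := by
    refine ((integrable_one_add_abs_zpow.mul_prod integrable_one_add_abs_zpow).const_mul C).mono'
      hcont.aestronglyMeasurable (ae_of_all _ fun p => ?_)
    have hbound := hbdd p.2 p.1
    rw [oneAddDeriv_iterate_const_mul, one_mul, mul_assoc] at hbound
    exact hbound.trans_eq (by ring)
  rw [oscPairing, oneAddDeriv_iterate_integral_mul hΦ hE hgrowth]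
  simp_rw [← integral_const_mul (FT _ _)]
  rw [integral_integral_swap hint, ← integral_const_mul]
  refine integral_congr_ae (ae_of_all _ fun ξ => ?_)
  simp only [oscPairing]
  rw [mul_left_comm, ← integral_const_mul (Φ ξ)]
  congr 2
  funext y
  ring

lemma uniformGrowth_mul_cexp (hΦ : ∀ M : ℕ, ∃ C : ℝ, ∀ ξ, ‖Φ ξ‖ ≤ C * (1 + |ξ|) ^ (-(M : ℤ)))
    (M : ℕ) : UniformGrowth 0 (fun ξ : ℝ => (1 + |ξ|) ^ (-(M : ℤ)))
      fun ξ y : ℝ => Φ ξ * Complex.exp (Complex.I * ξ * y) := by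
  refine ⟨fun ξ => contDiff_const.mul (contDiff_const.mul Complex.ofRealCLM.contDiff).cexp,
    fun k => ?_⟩
  obtain ⟨C, hC⟩ := hΦ (M + k)
  refine ⟨C, nonneg_of_norm_le_mul (hC 0) (by positivity), fun ξ y => ?_⟩
  have hexp : ‖Complex.exp (Complex.I * ξ * y)‖ = 1 := by simp [Complex.norm_exp]
  rw [iteratedDeriv_const_mul_field, iteratedDeriv_cexp_I_mul, norm_mul, norm_mul, hexp, norm_pow,
    norm_mul, Complex.norm_I, Complex.norm_real, Real.norm_eq_abs, one_mul, mul_one, zpow_zero,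
    mul_one]
  have hpos : 0 < 1 + |ξ| := by positivity
  calc ‖Φ ξ‖ * |ξ| ^ k ≤ C * (1 + |ξ|) ^ (-((M + k : ℕ) : ℤ)) * (1 + |ξ|) ^ k :=
        mul_le_mul (hC ξ) (pow_le_pow_left₀ (abs_nonneg ξ) (by linarith) k) (by positivity)
          ((norm_nonneg _).trans (hC ξ))
    _ = C * (1 + |ξ|) ^ (-(M : ℤ)) := by
        rw [mul_assoc, ← zpow_natCast, ← zpow_add₀ hpos.ne']
        congr 2
        push_cast
        ring

end Superposition

/-! ### Quantization -/

section Quantization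

variable {ι : Type*} {m m₁ m₂ : ℝ → ℝ → ℝ} {N N₁ N₂ K : ℕ} {a e q : ι → ℝ → ℝ → ℂ}
  {u : ℝ → ℂ} {h : ℝ}

lemma isTemperate_one_add_abs_zpow_neg (L : ℕ) :
    IsTemperate (fun x _ => (1 + |x|) ^ (-(L : ℤ))) L := by
  refine ⟨fun x _ => by positivity, 1, zero_le_one, fun x ξ y η => ?_⟩
  have hpeetre : 1 + |y| ≤ (1 + |x - y| + |ξ - η|) * (1 + |x|) := by
    have htri := abs_sub_abs_le_abs_sub y x
    rw [abs_sub_comm] at htri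
    nlinarith [abs_nonneg x, abs_nonneg (ξ - η), mul_nonneg (abs_nonneg x) (abs_nonneg (x - y)),
      mul_nonneg (abs_nonneg x) (abs_nonneg (ξ - η))]
  simp only [zpow_neg, zpow_natCast]
  rw [one_mul, ← div_eq_mul_inv, le_div_iff₀ (by positivity), inv_mul_le_iff₀ (by positivity),
    ← mul_pow, mul_comm (1 + |x|)]
  gcongr

lemma HasGrowth.isSymbol {N : ℤ} (hu : HasGrowth N u) :
    IsSymbol (fun x _ => (1 + |x|) ^ N) fun (_ : Unit) x _ => u x := by
  have hsmooth {u : ℝ → ℂ} (hu : HasGrowth N u) : IsSmooth fun x _ => u x :=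
    (hu.contDiff ()).comp contDiff_fst
  have hbdd {u : ℝ → ℂ} (hu : HasGrowth N u) :
      IsBoundedBy (fun x _ => (1 + |x|) ^ N) fun (_ : Unit) x _ => u x := by
    obtain ⟨C, hC, hle⟩ := hu.norm_le
    exact ⟨C, hC, fun _ x _ => by simpa using hle () x⟩
  refine ⟨fun _ => hsmooth hu, fun n => ?_⟩
  induction n generalizing u with
  | zero => exact hbdd hu
  | succ n ih =>
    refine ⟨hbdd hu, fun v => ?_⟩
    have hderiv : dirDeriv v (fun x _ => u x) = fun x _ => (v.1 : ℂ) * deriv u x := by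
      funext x ξ
      have hline : HasDerivAt (fun t : ℝ => x + t * v.1) v.1 0 := by
        simpa using ((hasDerivAt_id (0 : ℝ)).mul_const v.1).const_add x
      have hu' : HasDerivAt u (deriv u x) (x + 0 * v.1) := by simpa using hu.hasDerivAt () x
      simpa using ((hsmooth hu).hasDerivAt_line x ξ v 0).unique (hu'.scomp 0 hline)
    simp only [hderiv]
    exact (ih hu.deriv).const_mul (fun _ => hsmooth hu.deriv) fun _ => le_rfl

lemma IsSymbol.hasGrowth_left (ha : IsSymbol m a) {N : ℤ} {D ξ : ℝ} (hD : 0 ≤ D)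
    (hm : ∀ x, m x ξ ≤ D * (1 + |x|) ^ N) (i : ι) : HasGrowth N fun x => a i x ξ := by
  refine ⟨fun _ => (ha.1 i).left ξ, fun k => ?_⟩
  obtain ⟨C, hC, hbdd⟩ := (ha.iterate_dirDeriv (1, 0) k).isBoundedBy
  refine ⟨C * D, by positivity, fun _ x => ?_⟩
  rw [← (ha.1 i).iterate_left, mul_one, mul_assoc]
  exact (hbdd i x ξ).trans (mul_le_mul_of_nonneg_left (hm x) hC)

lemma IsSymbol.hasGrowth_right (ha : IsSymbol m a) (hm : IsTemperate m N) (i : ι) (h x : ℝ) :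
    HasGrowth N fun σ => a i x (h * σ) := by
  have hline := (ha.uniformGrowth_onLine hm (p := fun _ => (x, 0)) (v := fun _ => (0, h))
    fun _ => le_rfl).hasGrowth i
  simpa only [onLine_vertical, zero_add] using hline

lemma IsRapidlyDecreasing.comp_const_add (hu : IsRapidlyDecreasing u) (x : ℝ) :
    IsRapidlyDecreasing fun y => u (x + y) := fun L => by
  simpa only [add_comm] using (hu L).comp_add_right x

lemma FT_comp_const_add (u : ℝ → ℂ) (x s : ℝ) :
    FT (fun y => u (x + y)) s = Complex.exp (Complex.I * x * s) * FT u s := by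
  unfold FT
  rw [← integral_const_mul, ← integral_add_left_eq_self
    (fun y : ℝ => Complex.exp (Complex.I * x * s) * (Complex.exp (-(Complex.I * y * s)) * u y)) x]
  congr 1
  funext y
  rw [← mul_assoc, ← Complex.exp_add]
  congr 2
  push_cast
  ring

lemma Op_eq_oscPairing (hq : IsSymbol m q) (hm : IsTemperate m N) (hK : N + 2 ≤ K) (i : ι)
    (h : ℝ) (hu : IsRapidlyDecreasing u) (x : ℝ) :
    Op h (q i) u x = oscPairing K (fun σ => q i x (h * σ)) fun y => u (x + y) := by
  rw [(hq.hasGrowth_right hm i h x).oscPairing_eq_integral (hu.comp_const_add x) (by omega), Op]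
  congr 2
  funext σ
  rw [FT_comp_const_add]
  ring

lemma IsRapidlyDecreasing.Op (hu : IsRapidlyDecreasing u) (hq : IsSymbol m q)
    (hm : IsTemperate m N) (i : ι) (hh : h ∈ Set.Ioc 0 1) :
    IsRapidlyDecreasing (_root_.Op h (q i) u) := fun L => by
  have hcomp : _root_.Op h (q i) u =
      fun x => compSymbol (N + 4) h (q i) (fun x _ => u x) x 0 := by
    funext x
    simp only [Op_eq_oscPairing hq hm (K := N + 4) (by omega) i h hu, compSymbol, onLine_vertical,
      onLine_horizontal, zero_add]
  have hsymbol := isSymbol_compSymbol (hq.reindex fun _ : Unit => i) hm (hu (L + N)).isSymbol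
    (isTemperate_one_add_abs_zpow_neg (L + N)) le_rfl (t := fun _ => h) fun _ => hh
  obtain ⟨hpos, C, hC, hle⟩ := hm
  have hm₀ := hpos 0 0
  rw [hcomp]
  refine hsymbol.hasGrowth_left (D := C * m 0 0) (ξ := 0) (by positivity) (fun x => ?_) ()
  have hx : 0 < 1 + |x| := by positivity
  calc m x 0 * (1 + |x|) ^ (-((L + N : ℕ) : ℤ))
      ≤ C * (1 + |x|) ^ N * m 0 0 * (1 + |x|) ^ (-((L + N : ℕ) : ℤ)) := by
        gcongr
        simpa using hle x 0 0 0
    _ = C * m 0 0 * ((1 + |x|) ^ (N : ℤ) * (1 + |x|) ^ (-((L + N : ℕ) : ℤ))) := by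
        rw [zpow_natCast]
        ring
    _ = C * m 0 0 * (1 + |x|) ^ (-(L : ℤ)) := by
        rw [← zpow_add₀ hx.ne']
        congr 2
        push_cast
        ring

lemma IsSymbol.uniformGrowth_comp_mul (hq : IsSymbol m q) (hm : IsTemperate m N) (i : ι)
    (hh : h ∈ Set.Ioc 0 1) (x : ℝ) :
    UniformGrowth N (fun ξ : ℝ => (1 + |ξ|) ^ N) fun ξ y => q i (x + y) (h * ξ) := by
  have hline := (hq.reindex fun _ : ℝ => i).uniformGrowth_onLine hm
    (p := fun ξ => (x, h * ξ)) (v := fun _ => (1, 0)) fun _ => le_rfl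
  obtain ⟨hpos, C, hC, hle⟩ := hm
  have hm₀ := hpos x 0
  have hline' := hline.mono_weight (w' := fun ξ : ℝ => (1 + |ξ|) ^ N) (D := C * m x 0)
    (by positivity) fun ξ => by
      have hgrow := hle x (h * ξ) x 0
      have hξ : |h * ξ| ≤ |ξ| := by
        rw [abs_mul, abs_of_pos hh.1]
        exact mul_le_of_le_one_left (abs_nonneg ξ) hh.2
      rw [sub_self, abs_zero, add_zero, sub_zero] at hgrow
      refine hgrow.trans ?_
      rw [mul_right_comm]
      gcongr
  simpa only [onLine_horizontal] using hline'

/-- The coefficient of the plane wave `e^{iξy}` in the Fourier inversion formula for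
`y ↦ u (x + y)`. -/
def waveCoeff (u : ℝ → ℂ) (x ξ : ℝ) : ℂ :=
  (2 * Real.pi : ℂ)⁻¹ * (Complex.exp (Complex.I * x * ξ) * FT u ξ)

lemma Op_eq_integral_waveCoeff (h : ℝ) (b : ℝ → ℝ → ℂ) (u : ℝ → ℂ) (x : ℝ) :
    Op h b u x = ∫ ξ, waveCoeff u x ξ * b x (h * ξ) := by
  rw [Op, ← integral_const_mul]
  congr 1
  funext ξ
  rw [waveCoeff]
  ring

lemma waveCoeff_add (u : ℝ → ℂ) (x y ξ : ℝ) :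
    waveCoeff u (x + y) ξ = waveCoeff u x ξ * Complex.exp (Complex.I * ξ * y) := by
  have hexp : Complex.I * ((x + y : ℝ) : ℂ) * ξ = Complex.I * x * ξ + Complex.I * ξ * y := by
    push_cast
    ring
  rw [waveCoeff, waveCoeff, hexp, Complex.exp_add]
  ring

namespace IsRapidlyDecreasing

lemma continuous_waveCoeff (hu : IsRapidlyDecreasing u) (x : ℝ) : Continuous (waveCoeff u x) :=
  continuous_const.mul (Continuous.mul (by fun_prop) (continuous_FT hu.integrable))

lemma norm_waveCoeff_le (hu : IsRapidlyDecreasing u) (x : ℝ) (L : ℕ) :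
    ∃ C : ℝ, ∀ ξ, ‖waveCoeff u x ξ‖ ≤ C * (1 + |ξ|) ^ (-(L : ℤ)) := by
  obtain ⟨C, -, hbdd⟩ := (hu 2).norm_FT_le (by norm_num) L
  refine ⟨‖(2 * Real.pi : ℂ)⁻¹‖ * C, fun ξ => ?_⟩
  have hexp : ‖Complex.exp (Complex.I * x * ξ)‖ = 1 := by simp [Complex.norm_exp]
  rw [waveCoeff, norm_mul, norm_mul, hexp, one_mul, mul_assoc]
  exact mul_le_mul_of_nonneg_left (by simpa using hbdd () ξ) (norm_nonneg _)

lemma uniformGrowth_waveCoeff_mul (hu : IsRapidlyDecreasing u) (hq : IsSymbol m q)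
    (hm : IsTemperate m N) (i : ι) (hh : h ∈ Set.Ioc 0 1) (x : ℝ) :
    UniformGrowth N (fun ξ : ℝ => (1 + |ξ|) ^ (-2 : ℤ)) fun ξ y : ℝ =>
      waveCoeff u x ξ * (Complex.exp (Complex.I * ξ * y) * q i (x + y) (h * ξ)) := by
  have hprod := (uniformGrowth_mul_cexp (hu.norm_waveCoeff_le x) (N + 2)).mul
    (hq.uniformGrowth_comp_mul hm i hh x)
  have hweight (ξ : ℝ) : (1 + |ξ|) ^ (-((N + 2 : ℕ) : ℤ)) * (1 + |ξ|) ^ N ≤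
      1 * (1 + |ξ|) ^ (-2 : ℤ) := by
    have hξ : 0 < 1 + |ξ| := by positivity
    rw [← zpow_natCast, ← zpow_add₀ hξ.ne', one_mul]
    exact (congrArg _ (by push_cast; ring)).le
  simpa only [zero_add, mul_assoc] using hprod.mono_weight zero_le_one hweight

end IsRapidlyDecreasing

theorem Op_comp_eq_Op_compSymbol (he : IsSymbol m₁ e) (hm₁ : IsTemperate m₁ N₁)
    (hq : IsSymbol m₂ q) (hm₂ : IsTemperate m₂ N₂) (hK : N₁ + 2 ≤ K) (i : ι)
    (hh : h ∈ Set.Ioc 0 1) (hu : IsRapidlyDecreasing u) (x : ℝ) :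
    Op h (e i) (Op h (q i) u) x = Op h (compSymbol K h (e i) (q i)) u x := by
  let E (ξ y : ℝ) : ℂ := Complex.exp (Complex.I * ξ * y) * q i (x + y) (h * ξ)
  have hE : IsSmooth E := by
    have hofReal := Complex.ofRealCLM.contDiff (n := ∞)
    exact ((contDiff_const.mul (hofReal.comp contDiff_fst)).mul
      (hofReal.comp contDiff_snd)).cexp.mul ((hq.1 i).comp
        ((contDiff_const.add contDiff_snd).prodMk (contDiff_const.mul contDiff_fst)))
  have hinner : (fun y => Op h (q i) u (x + y)) = fun y => ∫ ξ, waveCoeff u x ξ * E ξ y := by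
    simp only [Op_eq_integral_waveCoeff, waveCoeff_add, mul_assoc, E]
  have hf := he.hasGrowth_right hm₁ i h x
  have hpair (ξ : ℝ) : oscPairing K (fun σ => e i x (h * σ)) (E ξ) =
      compSymbol K h (e i) (q i) x (h * ξ) := by
    rw [hf.oscPairing_cexp_mul (hq.uniformGrowth_comp_mul hm₂ i hh x |>.hasGrowth ξ) (by omega),
      compSymbol, onLine_vertical, onLine_horizontal]
    simp only [mul_add, add_comm]
  rw [Op_eq_oscPairing he hm₁ hK i h (hu.Op hq hm₂ i hh), hinner,
    hf.oscPairing_integral_mul (hu.continuous_waveCoeff x) hE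
      (hu.uniformGrowth_waveCoeff_mul hq hm₂ i hh x) (by omega), Op_eq_integral_waveCoeff]
  simp only [hpair]

lemma integrable_waveCoeff_mul (hu : IsRapidlyDecreasing u) (hq : IsSymbol m q)
    (hm : IsTemperate m N) (i : ι) (h x : ℝ) :
    Integrable fun ξ => waveCoeff u x ξ * q i x (h * ξ) := by
  have hgrowth := hq.hasGrowth_right hm i h x
  obtain ⟨C, hcoeff⟩ := hu.norm_waveCoeff_le x (N + 2)
  obtain ⟨D, -, hbdd⟩ := hgrowth.norm_le
  refine integrable_of_norm_le (C := C * D)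
    ((hu.continuous_waveCoeff x).mul (hgrowth.continuous ())) fun ξ => ?_
  have hξ : 0 < 1 + |ξ| := by positivity
  calc ‖waveCoeff u x ξ * q i x (h * ξ)‖
      ≤ (C * (1 + |ξ|) ^ (-((N + 2 : ℕ) : ℤ))) * (D * 1 * (1 + |ξ|) ^ (N : ℤ)) :=
        norm_mul_le_of_le (hcoeff ξ) (hbdd () ξ)
    _ = C * D * ((1 + |ξ|) ^ (-((N + 2 : ℕ) : ℤ)) * (1 + |ξ|) ^ (N : ℤ)) := by ring
    _ = C * D * (1 + |ξ|) ^ (-2 : ℤ) := by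
        rw [← zpow_add₀ hξ.ne']
        congr 2
        push_cast
        ring

lemma Op_add_const_mul (hq : IsSymbol m₁ q) (hm₁ : IsTemperate m₁ N₁) (he : IsSymbol m₂ e)
    (hm₂ : IsTemperate m₂ N₂) (i : ι) (h : ℝ) (hu : IsRapidlyDecreasing u) (x : ℝ) (c : ℂ) :
    Op h (fun x ξ => q i x ξ + c * e i x ξ) u x = Op h (q i) u x + c * Op h (e i) u x := by
  simp only [Op_eq_integral_waveCoeff]
  rw [← integral_const_mul c, ← integral_add (integrable_waveCoeff_mul hu hq hm₁ i h x)
    ((integrable_waveCoeff_mul hu he hm₂ i h x).const_mul c)]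
  congr 1
  funext ξ
  ring

lemma isRapidlyDecreasing_schwartzMap (u : SchwartzMap ℝ ℂ) : IsRapidlyDecreasing u := by
  refine fun L => ⟨fun _ => u.smooth (⊤ : ℕ∞), fun k => ?_⟩
  have hbdd (y : ℝ) := SchwartzMap.one_add_le_sup_seminorm_apply (𝕜 := ℝ) (m := (L, k))
    le_rfl le_rfl u y
  simp only [norm_iteratedFDeriv_eq_norm_iteratedDeriv, Real.norm_eq_abs] at hbdd
  refine ⟨_, (by positivity : (0 : ℝ) ≤ _).trans (hbdd 0), fun _ y => ?_⟩
  rw [mul_one, zpow_neg, zpow_natCast, ← div_eq_mul_inv, le_div_iff₀ (by positivity), mul_comm]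
  exact hbdd y

end Quantization

/-! ### Division by elliptic symbols -/

section Division

variable {ι : Type*} {m m' : ℝ → ℝ → ℝ} {b e : ι → ℝ → ℝ → ℂ} {T : ι → Set (ℝ × ℝ)}

/-- The `i`-th member of the family `b` vanishes outside `T i`. -/
def VanishesOff (T : ι → Set (ℝ × ℝ)) (b : ι → ℝ → ℝ → ℂ) : Prop :=
  ∀ i x ξ, (x, ξ) ∉ T i → b i x ξ = 0

/-- Ellipticity of the family `e` relative to the weight `m`, on the sets `T i`. -/
def IsEllipticOn (m : ℝ → ℝ → ℝ) (T : ι → Set (ℝ × ℝ)) (e : ι → ℝ → ℝ → ℂ) : Prop :=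
  ∃ c > 0, ∀ i x ξ, (x, ξ) ∈ T i → c * m x ξ ≤ ‖e i x ξ‖

lemma IsEllipticOn.ne_zero (he : IsEllipticOn m T e) (hm : ∀ x ξ, 0 < m x ξ) {i : ι} {x ξ : ℝ}
    (hp : (x, ξ) ∈ T i) : e i x ξ ≠ 0 := by
  obtain ⟨c, hc, hlower⟩ := he
  exact norm_pos_iff.1 ((mul_pos hc (hm x ξ)).trans_le (hlower i x ξ hp))

namespace VanishesOff

protected lemma dirDeriv (hb : VanishesOff T b) (hT : ∀ i, IsClosed (T i)) (v : ℝ × ℝ) :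
    VanishesOff T fun i => dirDeriv v (b i) := by
  intro i x ξ hp
  have hzero : (fun q : ℝ × ℝ => b i q.1 q.2) =ᶠ[𝓝 (x, ξ)] fun _ => 0 := by
    filter_upwards [(hT i).isOpen_compl.mem_nhds hp] with q hq using hb i q.1 q.2 hq
  simp [_root_.dirDeriv, hzero.fderiv_eq]

lemma iterate_dirDeriv (hb : VanishesOff T b) (hT : ∀ i, IsClosed (T i)) (v : ℝ × ℝ) (n : ℕ) :
    VanishesOff T fun i => (dirDeriv v)^[n] (b i) := by
  induction n generalizing b with
  | zero => exact hb
  | succ _ ih => exact ih (hb.dirDeriv hT v)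

lemma div (hb : VanishesOff T b) (e : ι → ℝ → ℝ → ℂ) :
    VanishesOff T fun i x ξ => b i x ξ / e i x ξ := fun i x ξ hp => by
  simp only [hb i x ξ hp, zero_div]

lemma const_mul (hb : VanishesOff T b) (c : ι → ℂ) :
    VanishesOff T fun i x ξ => c i * b i x ξ := fun i x ξ hp => by
  simp only [hb i x ξ hp, mul_zero]

lemma mul_div_cancel (hb : VanishesOff T b) (h0 : ∀ i x ξ, (x, ξ) ∈ T i → e i x ξ ≠ 0) (i : ι)
    (x ξ : ℝ) : e i x ξ * (b i x ξ / e i x ξ) = b i x ξ := by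
  by_cases hp : (x, ξ) ∈ T i
  · exact mul_div_cancel₀ _ (h0 i x ξ hp)
  · rw [hb i x ξ hp, zero_div, mul_zero]

lemma isSmooth_div (hb : VanishesOff T b) (hT : ∀ i, IsClosed (T i)) (hsb : ∀ i, IsSmooth (b i))
    (hse : ∀ i, IsSmooth (e i)) (h0 : ∀ i x ξ, (x, ξ) ∈ T i → e i x ξ ≠ 0) (i : ι) :
    IsSmooth fun x ξ => b i x ξ / e i x ξ := by
  refine contDiff_iff_contDiffAt.2 fun p => ?_
  by_cases hp : p ∈ T i
  · simp_rw [div_eq_mul_inv]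
    exact (ContDiff.contDiffAt (hsb i)).mul ((ContDiff.contDiffAt (hse i)).inv (h0 i p.1 p.2 hp))
  · refine (contDiffAt_const (c := (0 : ℂ))).congr_of_eventuallyEq ?_
    filter_upwards [(hT i).isOpen_compl.mem_nhds hp] with q hq
    exact hb.div e i q.1 q.2 hq

lemma dirDeriv_div (hb : VanishesOff T b) (hT : ∀ i, IsClosed (T i)) (hsb : ∀ i, IsSmooth (b i))
    (hse : ∀ i, IsSmooth (e i)) (h0 : ∀ i x ξ, (x, ξ) ∈ T i → e i x ξ ≠ 0) (v : ℝ × ℝ) (i : ι) :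
    _root_.dirDeriv v (fun x ξ => b i x ξ / e i x ξ) = fun x ξ => (_root_.dirDeriv v (b i) x ξ +
      -1 * (b i x ξ / e i x ξ * _root_.dirDeriv v (e i) x ξ)) / e i x ξ := by
  have hleibniz := dirDeriv_mul v (hse i) (hb.isSmooth_div hT hsb hse h0 i)
  simp_rw [hb.mul_div_cancel h0 i] at hleibniz
  funext x ξ
  by_cases hp : (x, ξ) ∈ T i
  · rw [eq_div_iff (h0 i x ξ hp), hleibniz]
    ring
  · have hleft : _root_.dirDeriv v (fun x ξ => b i x ξ / e i x ξ) x ξ = 0 :=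
      (hb.div e).dirDeriv hT v i x ξ hp
    have hright : _root_.dirDeriv v (b i) x ξ = 0 := hb.dirDeriv hT v i x ξ hp
    rw [hleft, hright, hb i x ξ hp]
    simp

lemma isBoundedBy_div (hb : VanishesOff T b) (hbdd : IsBoundedBy m' b) (he : IsEllipticOn m T e)
    (hm : ∀ x ξ, 0 < m x ξ) :
    IsBoundedBy (fun x ξ => m' x ξ * (m x ξ)⁻¹) fun i x ξ => b i x ξ / e i x ξ := by
  obtain ⟨C, hC, hbdd⟩ := hbdd
  obtain ⟨c, hc, hlower⟩ := he
  refine ⟨C * c⁻¹, by positivity, fun i x ξ => ?_⟩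
  have hCm' : 0 ≤ C * m' x ξ := (norm_nonneg _).trans (hbdd i x ξ)
  have hmpos := hm x ξ
  have hfactor : C * c⁻¹ * (m' x ξ * (m x ξ)⁻¹) = C * m' x ξ / (c * m x ξ) := by
    field_simp
  rw [hfactor, norm_div]
  by_cases hp : (x, ξ) ∈ T i
  · exact div_le_div₀ hCm' (hbdd i x ξ) (by positivity) (hlower i x ξ hp)
  · rw [hb i x ξ hp, norm_zero, zero_div]
    positivity

lemma isSymbolUpTo_div (hT : ∀ i, IsClosed (T i)) (hm : ∀ x ξ, 0 < m x ξ) (he : IsSymbol m e)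
    (hell : IsEllipticOn m T e) (hb : VanishesOff T b) (hsb : ∀ i, IsSmooth (b i)) {n : ℕ}
    (hsym : IsSymbolUpTo m' n b) :
    IsSymbolUpTo (fun x ξ => m' x ξ * (m x ξ)⁻¹) n fun i x ξ => b i x ξ / e i x ξ := by
  induction n generalizing b with
  | zero => exact hb.isBoundedBy_div hsym hell hm
  | succ n ih =>
    refine ⟨hb.isBoundedBy_div hsym.isBoundedBy hell hm, fun v => ?_⟩
    have h0 : ∀ i x ξ, (x, ξ) ∈ T i → e i x ξ ≠ 0 := fun i x ξ => hell.ne_zero hm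
    have hquot := hb.isSmooth_div hT hsb he.1 h0
    have hprod : ∀ i, IsSmooth fun x ξ => b i x ξ / e i x ξ * _root_.dirDeriv v (e i) x ξ :=
      fun i => (hquot i).mul ((he.1 i).dirDeriv v)
    have hprod_sym := (ih hb hsb hsym.of_succ).mul hquot (fun i => (he.1 i).dirDeriv v)
      ((he.dirDeriv v).2 n)
    simp only [inv_mul_cancel_right₀ (hm _ _).ne'] at hprod_sym
    simp_rw [hb.dirDeriv_div hT hsb he.1 h0 v]
    refine ih (fun i x ξ hp => ?_) (fun i => ?_) ?_
    · simp only [hb.dirDeriv hT v i x ξ hp, hb i x ξ hp, zero_div, zero_mul, mul_zero, add_zero]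
    · exact ((hsb i).dirDeriv v).add ((isSmooth_const (-1)).mul (hprod i))
    · exact (hsym.2 v).add (fun i => (hsb i).dirDeriv v)
        (fun i => (isSmooth_const (-1)).mul (hprod i))
        (hprod_sym.const_mul (C := 1) hprod fun _ => by simp)

end VanishesOff

lemma IsSymbol.div (hb : IsSymbol m' b) (hsupp : VanishesOff T b) (hT : ∀ i, IsClosed (T i))
    (hm : ∀ x ξ, 0 < m x ξ) (he : IsSymbol m e) (hell : IsEllipticOn m T e) :
    IsSymbol (fun x ξ => m' x ξ * (m x ξ)⁻¹) fun i x ξ => b i x ξ / e i x ξ :=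
  ⟨hsupp.isSmooth_div hT hb.1 he.1 fun _ _ _ => hell.ne_zero hm,
    fun n => hsupp.isSymbolUpTo_div hT hm he hell hb.1 (hb.2 n)⟩

end Division

/-! ### The parametrix -/

section Parametrix

variable {ι : Type*} {m m₁ m₂ : ℝ → ℝ → ℝ} {N₁ N₂ : ℕ} {a b e f g : ι → ℝ → ℝ → ℂ}
  {T : ι → Set (ℝ × ℝ)} {t : ι → ℝ}

lemma norm_ofReal_le_one_of_mem_Ioc {t : ℝ} (ht : t ∈ Set.Ioc (0 : ℝ) 1) : ‖(t : ℂ)‖ ≤ 1 := by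
  rw [Complex.norm_real, Real.norm_of_nonneg ht.1.le]
  exact ht.2

lemma IsSmooth.iterate_dirDeriv_add_const_mul {a b : ℝ → ℝ → ℂ} (ha : IsSmooth a)
    (hb : IsSmooth b) (c : ℂ) (v : ℝ × ℝ) (n : ℕ) :
    (dirDeriv v)^[n] (fun x ξ => a x ξ + c * b x ξ) =
      fun x ξ => (dirDeriv v)^[n] a x ξ + c * (dirDeriv v)^[n] b x ξ := by
  induction n generalizing a b with
  | zero => rfl
  | succ n ih =>
    have hstep : dirDeriv v (fun x ξ => a x ξ + c * b x ξ) =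
        fun x ξ => dirDeriv v a x ξ + c * dirDeriv v b x ξ := by
      rw [dirDeriv_add v ha ((isSmooth_const c).mul hb), dirDeriv_mul v (isSmooth_const c) hb,
        dirDeriv_const]
      simp only [zero_mul, zero_add]
    simp only [Function.iterate_succ_apply, hstep]
    exact ih (ha.dirDeriv v) (hb.dirDeriv v)

/-- The part of `compExpansion (N + 1) t f g` of positive order in `t`, divided by `t`. -/
def compCorrection (N : ℕ) (t : ι → ℝ) (f g : ι → ℝ → ℝ → ℂ) (i : ι) (x ξ : ℝ) : ℂ :=
  ∑ k ∈ Finset.range N, -Complex.I * (-Complex.I * t i) ^ k / (k + 1).factorial *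
    ((∂₂)^[k + 1] (f i) x ξ * (∂₁)^[k + 1] (g i) x ξ)

lemma compExpansion_succ_eq (N : ℕ) (t : ι → ℝ) (f g : ι → ℝ → ℝ → ℂ) (i : ι) (x ξ : ℝ) :
    compExpansion (N + 1) (t i) (f i) (g i) x ξ =
      f i x ξ * g i x ξ + t i * compCorrection N t f g i x ξ := by
  rw [compExpansion, compCorrection, Finset.sum_range_succ', add_comm, Finset.mul_sum]
  congr 1
  · simp
  · refine Finset.sum_congr rfl fun k _ => ?_
    rw [pow_succ]
    ring

lemma IsSymbol.compCorrection (hf : IsSymbol m₁ f) (hg : IsSymbol m₂ g) (N : ℕ)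
    (ht : ∀ i, t i ∈ Set.Ioc 0 1) :
    IsSymbol (fun x ξ => m₁ x ξ * m₂ x ξ) (compCorrection N t f g) := by
  refine .sum _ fun k _ =>
    ((hf.iterate_dirDeriv _ (k + 1)).mul (hg.iterate_dirDeriv _ (k + 1))).const_mul (C := 1)
      fun i => ?_
  have hfactorial : (1 : ℝ) ≤ (k + 1).factorial := by exact_mod_cast (k + 1).factorial_pos
  rw [norm_div, norm_mul, norm_pow, norm_mul, norm_neg, Complex.norm_I, one_mul, one_mul,
    Complex.norm_natCast]
  exact div_le_one_of_le₀ ((pow_le_one₀ (norm_nonneg _)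
    (norm_ofReal_le_one_of_mem_Ioc (ht i))).trans hfactorial) (by positivity)

namespace VanishesOff

lemma compCorrection_left (hf : VanishesOff T f) (hT : ∀ i, IsClosed (T i)) (N : ℕ) (t : ι → ℝ)
    (g : ι → ℝ → ℝ → ℂ) : VanishesOff T (compCorrection N t f g) :=
  fun i x ξ hp => Finset.sum_eq_zero fun k _ => by
    simp only [hf.iterate_dirDeriv hT _ (k + 1) i x ξ hp, zero_mul, mul_zero]

lemma compCorrection_right (hg : VanishesOff T g) (hT : ∀ i, IsClosed (T i)) (N : ℕ) (t : ι → ℝ)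
    (f : ι → ℝ → ℝ → ℂ) : VanishesOff T (compCorrection N t f g) :=
  fun i x ξ hp => Finset.sum_eq_zero fun k _ => by
    simp only [hg.iterate_dirDeriv hT _ (k + 1) i x ξ hp, mul_zero]

end VanishesOff

lemma compExpansion_add_const_mul_left {p q : ℝ → ℝ → ℂ} (hp : IsSmooth p) (hq : IsSmooth q)
    (M : ℕ) (s : ℝ) (e : ℝ → ℝ → ℂ) (c : ℂ) (x ξ : ℝ) :
    compExpansion M s (fun x ξ => p x ξ + c * q x ξ) e x ξ =
      compExpansion M s p e x ξ + c * compExpansion M s q e x ξ := by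
  simp only [compExpansion, Finset.mul_sum, ← Finset.sum_add_distrib,
    hp.iterate_dirDeriv_add_const_mul hq]
  exact Finset.sum_congr rfl fun k _ => by ring

lemma compExpansion_add_const_mul_right {p q : ℝ → ℝ → ℂ} (hp : IsSmooth p) (hq : IsSmooth q)
    (M : ℕ) (s : ℝ) (e : ℝ → ℝ → ℂ) (c : ℂ) (x ξ : ℝ) :
    compExpansion M s e (fun x ξ => p x ξ + c * q x ξ) x ξ =
      compExpansion M s e p x ξ + c * compExpansion M s e q x ξ := by
  simp only [compExpansion, Finset.mul_sum, ← Finset.sum_add_distrib,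
    hp.iterate_dirDeriv_add_const_mul hq]
  exact Finset.sum_congr rfl fun k _ => by ring

/-- The operator `P` on families of symbols in `S(m⁻¹)` is multiplication by `e` up to a term `t S`
that maps into `S(1)` without enlarging supports. Truncated symbolic composition with `e`, on either
side, has this form. -/
structure IsMulPerturbation (m : ℝ → ℝ → ℝ) (t : ι → ℝ) (e : ι → ℝ → ℝ → ℂ)
    (P S : (ι → ℝ → ℝ → ℂ) → ι → ℝ → ℝ → ℂ) : Prop where
  eq_mul_add : ∀ q i x ξ, P q i x ξ = e i x ξ * q i x ξ + t i * S q i x ξ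
  isSymbol : ∀ {q}, IsSymbol (fun x ξ => (m x ξ)⁻¹) q → IsSymbol (fun _ _ => 1) (S q)
  vanishesOff : ∀ {T q}, (∀ i, IsClosed (T i)) → VanishesOff T q → VanishesOff T (S q)
  map_add_const_mul : ∀ {p q}, (∀ i, IsSmooth (p i)) → (∀ i, IsSmooth (q i)) →
    ∀ (c : ι → ℂ) i x ξ,
      P (fun i x ξ => p i x ξ + c i * q i x ξ) i x ξ = P p i x ξ + c i * P q i x ξ

lemma isMulPerturbation_compExpansion_right (hm : ∀ x ξ, 0 < m x ξ) (he : IsSymbol m e)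
    (ht : ∀ i, t i ∈ Set.Ioc 0 1) (N : ℕ) :
    IsMulPerturbation m t e (fun q i => compExpansion (N + 1) (t i) (e i) (q i))
      (compCorrection N t e) where
  eq_mul_add q := compExpansion_succ_eq N t e q
  isSymbol hq := by simpa only [mul_inv_cancel₀ (hm _ _).ne'] using he.compCorrection hq N ht
  vanishesOff hT hq := hq.compCorrection_right hT N t e
  map_add_const_mul hp hq c i :=
    compExpansion_add_const_mul_right (hp i) (hq i) (N + 1) (t i) (e i) (c i)

lemma isMulPerturbation_compExpansion_left (hm : ∀ x ξ, 0 < m x ξ) (he : IsSymbol m e)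
    (ht : ∀ i, t i ∈ Set.Ioc 0 1) (N : ℕ) :
    IsMulPerturbation m t e (fun q i => compExpansion (N + 1) (t i) (q i) (e i))
      (fun q => compCorrection N t q e) where
  eq_mul_add q i x ξ := by rw [compExpansion_succ_eq, mul_comm (q i x ξ)]
  isSymbol hq := by simpa only [inv_mul_cancel₀ (hm _ _).ne'] using hq.compCorrection he N ht
  vanishesOff hT hq := hq.compCorrection_left hT N t e
  map_add_const_mul hp hq c i :=
    compExpansion_add_const_mul_left (hp i) (hq i) (N + 1) (t i) (e i) (c i)

lemma IsMulPerturbation.map_add_const_mul_div {P S : (ι → ℝ → ℝ → ℂ) → ι → ℝ → ℝ → ℂ}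
    {q : ι → ℝ → ℝ → ℂ} (hP : IsMulPerturbation m t e P S) (hq : ∀ i, IsSmooth (q i))
    (hquot : ∀ i, IsSmooth fun x ξ => b i x ξ / e i x ξ) (hb : VanishesOff T b)
    (h0 : ∀ i x ξ, (x, ξ) ∈ T i → e i x ξ ≠ 0) (c : ι → ℂ) (i : ι) (x ξ : ℝ) :
    P (fun i x ξ => q i x ξ + c i * (b i x ξ / e i x ξ)) i x ξ =
      P q i x ξ + c i * (b i x ξ + t i * S (fun i x ξ => b i x ξ / e i x ξ) i x ξ) := by
  rw [hP.map_add_const_mul hq hquot, hP.eq_mul_add fun i x ξ => b i x ξ / e i x ξ,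
    hb.mul_div_cancel h0]

/-- The error `b` of the `n`-th approximation is removed by subtracting `t ^ (n + 1) * (b / e)`;
this creates the new error `-S (b / e)`, one order higher in `t`. -/
lemma IsMulPerturbation.exists_approx_solution {P S : (ι → ℝ → ℝ → ℂ) → ι → ℝ → ℝ → ℂ}
    (hP : IsMulPerturbation m t e P S) (hm : ∀ x ξ, 0 < m x ξ) (he : IsSymbol m e)
    (ht : ∀ i, t i ∈ Set.Ioc 0 1) (hT : ∀ i, IsClosed (T i)) (hell : IsEllipticOn m T e)
    (ha : IsSymbol (fun _ _ => 1) a) (hsupp : VanishesOff T a) (n : ℕ) :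
    ∃ q₁ b, IsSymbol (fun x ξ => (m x ξ)⁻¹) q₁ ∧
      IsSymbol (fun x ξ => (m x ξ)⁻¹) (fun i x ξ => a i x ξ / e i x ξ + t i * q₁ i x ξ) ∧
      IsSymbol (fun _ _ => 1) b ∧ VanishesOff T b ∧
      ∀ i x ξ, P (fun i x ξ => a i x ξ / e i x ξ + t i * q₁ i x ξ) i x ξ =
        a i x ξ + (t i : ℂ) ^ (n + 1) * b i x ξ := by
  have h0 : ∀ i x ξ, (x, ξ) ∈ T i → e i x ξ ≠ 0 := fun i x ξ => hell.ne_zero hm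
  have hdiv {b : ι → ℝ → ℝ → ℂ} (hb : IsSymbol (fun _ _ => 1) b) (hbT : VanishesOff T b) :
      IsSymbol (fun x ξ => (m x ξ)⁻¹) fun i x ξ => b i x ξ / e i x ξ := by
    simpa only [one_mul] using hb.div hbT hT hm he hell
  have hadd {q₁ : ι → ℝ → ℝ → ℂ} (hq₁ : IsSymbol (fun x ξ => (m x ξ)⁻¹) q₁) :=
    (hdiv ha hsupp).add (hq₁.const_mul fun i => norm_ofReal_le_one_of_mem_Ioc (ht i))
  induction n with
  | zero =>
    refine ⟨fun _ _ _ => 0, S fun i x ξ => a i x ξ / e i x ξ, .zero, hadd .zero,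
      hP.isSymbol (hdiv ha hsupp), hP.vanishesOff hT (hsupp.div e), fun i x ξ => ?_⟩
    simp only [mul_zero, add_zero, zero_add, pow_one]
    rw [hP.eq_mul_add, hsupp.mul_div_cancel h0]
  | succ n ih =>
    obtain ⟨q₁, b, hq₁, hq, hb, hbT, hsolve⟩ := ih
    have hpow (i : ι) : ‖-(t i : ℂ) ^ n‖ ≤ 1 := by
      rw [norm_neg, norm_pow]
      exact pow_le_one₀ (norm_nonneg _) (norm_ofReal_le_one_of_mem_Ioc (ht i))
    have hq₁' := hq₁.add ((hdiv hb hbT).const_mul hpow)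
    refine ⟨_, fun i x ξ => -1 * S (fun i x ξ => b i x ξ / e i x ξ) i x ξ, hq₁', hadd hq₁',
      (hP.isSymbol (hdiv hb hbT)).const_mul (C := 1) fun _ => by simp,
      (hP.vanishesOff hT (hbT.div e)).const_mul fun _ => -1, fun i x ξ => ?_⟩
    calc P (fun i x ξ => a i x ξ / e i x ξ +
            t i * (q₁ i x ξ + -(t i : ℂ) ^ n * (b i x ξ / e i x ξ))) i x ξ
        = P (fun i x ξ => (a i x ξ / e i x ξ + t i * q₁ i x ξ) +
            -(t i : ℂ) ^ (n + 1) * (b i x ξ / e i x ξ)) i x ξ := by ring_nf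
      _ = _ := by
        rw [hP.map_add_const_mul_div hq.1 (hdiv hb hbT).1 hbT h0 fun i => -(t i : ℂ) ^ (n + 1),
          hsolve]
        ring

lemma exists_Op_eq_Op_comp_add_pow (hm₁ : IsTemperate m₁ N₁) (hm₂ : IsTemperate m₂ N₂)
    (hmul : ∀ x ξ, m₁ x ξ * m₂ x ξ = 1) (ht : ∀ i, t i ∈ Set.Ioc 0 1) (hf : IsSymbol m₁ f)
    (hg : IsSymbol m₂ g) (hb : IsSymbol (fun _ _ => 1) b) {N : ℕ}
    (hexp : ∀ i x ξ, compExpansion (N + 1) (t i) (f i) (g i) x ξ =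
      a i x ξ + (t i : ℂ) ^ (N + 1) * b i x ξ) :
    ∃ r, IsSymbol (fun _ _ => 1) r ∧ ∀ i {u : ℝ → ℂ}, IsRapidlyDecreasing u → ∀ x,
      Op (t i) (a i) u x =
        Op (t i) (f i) (Op (t i) (g i) u) x + (t i : ℂ) ^ N * Op (t i) (r i) u x := by
  have hrem := isSymbol_compRemainder hf hm₁ hg hm₂ (K := N₁ + 4) le_rfl (N + 1) ht
  have hcomp := isSymbol_compSymbol hf hm₁ hg hm₂ (K := N₁ + 4) le_rfl ht
  simp only [hmul] at hrem hcomp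
  have hone : IsTemperate (fun _ _ => 1) 0 := ⟨fun _ _ => one_pos, 1, zero_le_one, by simp⟩
  have hr : IsSymbol (fun _ _ => 1) fun i x ξ => -(t i : ℂ) *
      (b i x ξ + compRemainder (N₁ + 4) (N + 1) (t i) (f i) (g i) x ξ) :=
    (hb.add hrem).const_mul fun i => by
      rw [norm_neg]
      exact norm_ofReal_le_one_of_mem_Ioc (ht i)
  refine ⟨_, hr, fun i u hu x => ?_⟩
  rw [Op_comp_eq_Op_compSymbol hf hm₁ hg hm₂ (K := N₁ + 4) (by omega) i (ht i) hu,
    ← Op_add_const_mul hcomp hone hr hone i _ hu]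
  congr 1
  funext x ξ
  rw [compSymbol_eq_expansion_add_remainder _ (N + 1) (ht i).1.ne', hexp]
  ring

lemma exists_right_parametrix (hm : IsTemperate m N₁)
    (hminv : IsTemperate (fun x ξ => (m x ξ)⁻¹) N₂) (he : IsSymbol m e)
    (ht : ∀ i, t i ∈ Set.Ioc 0 1) (hT : ∀ i, IsClosed (T i)) (hell : IsEllipticOn m T e)
    (ha : IsSymbol (fun _ _ => 1) a) (hsupp : VanishesOff T a) (N : ℕ) :
    ∃ q₁ r, IsSymbol (fun x ξ => (m x ξ)⁻¹) q₁ ∧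
      IsSymbol (fun x ξ => (m x ξ)⁻¹) (fun i x ξ => a i x ξ / e i x ξ + t i * q₁ i x ξ) ∧
      IsSymbol (fun _ _ => 1) r ∧ ∀ i {u : ℝ → ℂ}, IsRapidlyDecreasing u → ∀ x,
        Op (t i) (a i) u x =
          Op (t i) (e i) (Op (t i) (fun x ξ => a i x ξ / e i x ξ + t i * q₁ i x ξ) u) x +
            (t i : ℂ) ^ N * Op (t i) (r i) u x := by
  obtain ⟨q₁, b, hq₁, hq, hb, -, hsolve⟩ :=
    (isMulPerturbation_compExpansion_right hm.1 he ht N).exists_approx_solution hm.1 he ht hT hell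
      ha hsupp N
  exact ⟨q₁, (exists_Op_eq_Op_comp_add_pow hm hminv (fun x ξ => mul_inv_cancel₀ (hm.1 x ξ).ne') ht
    he hq hb hsolve).imp fun _ hr => ⟨hq₁, hq, hr⟩⟩

lemma exists_left_parametrix (hm : IsTemperate m N₁)
    (hminv : IsTemperate (fun x ξ => (m x ξ)⁻¹) N₂) (he : IsSymbol m e)
    (ht : ∀ i, t i ∈ Set.Ioc 0 1) (hT : ∀ i, IsClosed (T i)) (hell : IsEllipticOn m T e)
    (ha : IsSymbol (fun _ _ => 1) a) (hsupp : VanishesOff T a) (N : ℕ) :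
    ∃ q r, IsSymbol (fun x ξ => (m x ξ)⁻¹) q ∧ IsSymbol (fun _ _ => 1) r ∧
      ∀ i {u : ℝ → ℂ}, IsRapidlyDecreasing u → ∀ x,
        Op (t i) (a i) u x =
          Op (t i) (q i) (Op (t i) (e i) u) x + (t i : ℂ) ^ N * Op (t i) (r i) u x := by
  obtain ⟨q₁, b, -, hq, hb, -, hsolve⟩ :=
    (isMulPerturbation_compExpansion_left hm.1 he ht N).exists_approx_solution hm.1 he ht hT hell
      ha hsupp N
  exact ⟨_, (exists_Op_eq_Op_comp_add_pow hminv hm (fun x ξ => inv_mul_cancel₀ (hm.1 x ξ).ne') ht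
    hq he hb hsolve).imp fun _ hr => ⟨hq, hr⟩⟩

end Parametrix

section Semiclassical

variable {m : ℝ → ℝ → ℝ}

lemma IsOrderFunction.exists_isTemperate (hm : IsOrderFunction m) : ∃ N, IsTemperate m N := by
  obtain ⟨hpos, -, C, hC, N, hgrowth⟩ := hm
  exact ⟨N, hpos, C, hC.le, hgrowth⟩

open Classical in
/-- Turns a family of symbols indexed by `h ∈ (0, 1]` into one defined for all real `h`, as the
class `SymS` requires. -/
def extendByZero (b : Set.Ioc (0 : ℝ) 1 → ℝ → ℝ → ℂ) (h : ℝ) : ℝ → ℝ → ℂ :=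
  if hh : h ∈ Set.Ioc (0 : ℝ) 1 then b ⟨h, hh⟩ else fun _ _ => 0

lemma extendByZero_coe (b : Set.Ioc (0 : ℝ) 1 → ℝ → ℝ → ℂ) (h : Set.Ioc (0 : ℝ) 1) :
    extendByZero b h = b h :=
  dif_pos h.2

lemma IsSymbol.symS_extendByZero {b : Set.Ioc (0 : ℝ) 1 → ℝ → ℝ → ℂ} (hb : IsSymbol m b)
    (hm : ∀ x ξ, 0 ≤ m x ξ) : SymS m (extendByZero b) :=
  (symS_iff_isSymbol hm).2 (by simpa only [extendByZero_coe] using hb)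

lemma vanishesOff_tsupport {ι : Type*} (a : ι → ℝ → ℝ → ℂ) :
    VanishesOff (fun i => tsupport fun q : ℝ × ℝ => a i q.1 q.2) a :=
  fun i _ _ hp => image_eq_zero_of_notMem_tsupport (f := fun q : ℝ × ℝ => a i q.1 q.2) hp

lemma isEllipticOn_tsupport {ι : Type*} {a e : ι → ℝ → ℝ → ℂ}
    (hm : Continuous fun q : ℝ × ℝ => m q.1 q.2) (he : ∀ i, IsSmooth (e i)) {c : ℝ} (hc : 0 < c)
    (hlower : ∀ i x ξ, a i x ξ ≠ 0 → c * m x ξ ≤ ‖e i x ξ‖) :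
    IsEllipticOn m (fun i => tsupport fun q : ℝ × ℝ => a i q.1 q.2) e := by
  refine ⟨c, hc, fun i x ξ hp => ?_⟩
  have hclosed : IsClosed {q : ℝ × ℝ | c * m q.1 q.2 ≤ ‖e i q.1 q.2‖} :=
    isClosed_le (continuous_const.mul hm) (ContDiff.continuous (he i)).norm
  exact closure_minimal (fun q hq => hlower i q.1 q.2 hq) hclosed hp

end Semiclassical

theorem stmt_18_general (m : ℝ → ℝ → ℝ) (hm : IsOrderFunction m)
    (hminv : IsOrderFunction fun x ξ => (m x ξ)⁻¹)
    (a : ℝ → ℝ → ℝ → ℂ) (ha : SymS (fun _ _ => 1) a) (e : ℝ → ℝ → ℝ → ℂ) (he : SymS m e)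
    (c : ℝ) (hc : 0 < c)
    (hlower : ∀ h ∈ Set.Ioc (0 : ℝ) 1, ∀ x ξ, a h x ξ ≠ 0 → c * m x ξ ≤ ‖e h x ξ‖) (N : ℕ) :
    (∃ q q₁ r : ℝ → ℝ → ℝ → ℂ,
      SymS (fun x ξ => (m x ξ)⁻¹) q ∧ SymS (fun x ξ => (m x ξ)⁻¹) q₁ ∧ SymS (fun _ _ => 1) r ∧
      (∀ h x ξ : ℝ, q h x ξ = a h x ξ / e h x ξ + h * q₁ h x ξ) ∧
      ∀ h ∈ Set.Ioc (0 : ℝ) 1, ∀ u : SchwartzMap ℝ ℂ, ∀ x : ℝ,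
        Op h (a h) u x = Op h (e h) (Op h (q h) u) x + (h : ℂ) ^ N * Op h (r h) u x) ∧
    ∃ q r : ℝ → ℝ → ℝ → ℂ,
      SymS (fun x ξ => (m x ξ)⁻¹) q ∧ SymS (fun _ _ => 1) r ∧
      ∀ h ∈ Set.Ioc (0 : ℝ) 1, ∀ u : SchwartzMap ℝ ℂ, ∀ x : ℝ,
        Op h (a h) u x = Op h (q h) (Op h (e h) u) x + (h : ℂ) ^ N * Op h (r h) u x := by
  obtain ⟨N₁, hm_temp⟩ := hm.exists_isTemperate
  obtain ⟨N₂, hminv_temp⟩ := hminv.exists_isTemperate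
  have hinv_nonneg := fun x ξ => (hminv.1 x ξ).le
  have ha' := (symS_iff_isSymbol fun _ _ => zero_le_one).1 ha
  have he' := (symS_iff_isSymbol fun x ξ => (hm.1 x ξ).le).1 he
  have hell := isEllipticOn_tsupport hm.2.1.continuous he'.1 hc
    fun h : Set.Ioc (0 : ℝ) 1 => hlower h h.2
  have hsupp := vanishesOff_tsupport fun h : Set.Ioc (0 : ℝ) 1 => a h
  have hclosed := fun h : Set.Ioc (0 : ℝ) 1 => isClosed_tsupport fun q : ℝ × ℝ => a h q.1 q.2
  obtain ⟨q₁, r, hq₁, hq, hr, hright⟩ := exists_right_parametrix hm_temp hminv_temp he'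
    (fun h => h.2) hclosed hell ha' hsupp N
  obtain ⟨q', r', hq', hr', hleft⟩ := exists_left_parametrix hm_temp hminv_temp he'
    (fun h => h.2) hclosed hell ha' hsupp N
  refine ⟨⟨_, extendByZero q₁, extendByZero r, (symS_iff_isSymbol hinv_nonneg).2 ?_,
    hq₁.symS_extendByZero hinv_nonneg, hr.symS_extendByZero fun _ _ => zero_le_one,
    fun _ _ _ => rfl, fun h hh u x => ?_⟩, extendByZero q', extendByZero r',
    hq'.symS_extendByZero hinv_nonneg, hr'.symS_extendByZero fun _ _ => zero_le_one,
    fun h hh u x => ?_⟩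
  · simpa only [extendByZero_coe] using hq
  · simpa only [extendByZero_coe _ ⟨h, hh⟩] using
      hright ⟨h, hh⟩ (isRapidlyDecreasing_schwartzMap u) x
  · simpa only [extendByZero_coe _ ⟨h, hh⟩] using
      hleft ⟨h, hh⟩ (isRapidlyDecreasing_schwartzMap u) x

end

/-- Corollary A.3: elliptic division of symbols, with remainders of
arbitrarily high order in `h`; here `e ≥ c·m > 0` on a neighborhood of the support of `a`,
and one may take `q = a/e + h·q₁`. -/
theorem stmt_18 (m : ℝ → ℝ → ℝ) (hm : IsOrderFunction m)
    (hminv : IsOrderFunction (fun x ξ => (m x ξ)⁻¹))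
    (a : ℝ → ℝ → ℝ → ℂ) (ha : SymS (fun _ _ => 1) a)
    (e : ℝ → ℝ → ℝ → ℝ) (he : SymS m (fun h x ξ => (Complex.ofReal (e h x ξ))))
    (c : ℝ) (hc : 0 < c)
    (U : Set (ℝ × ℝ)) (hU : IsOpen U)
    (hsupp : ∀ h ∈ Set.Ioc (0:ℝ) 1, {q : ℝ × ℝ | a h q.1 q.2 ≠ 0} ⊆ U)
    (helow : ∀ h ∈ Set.Ioc (0:ℝ) 1, ∀ q ∈ U, c * m q.1 q.2 ≤ e h q.1 q.2) :
    ∀ N : ℕ,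
      (∃ q q₁ r : ℝ → ℝ → ℝ → ℂ,
        SymS (fun x ξ => (m x ξ)⁻¹) q ∧ SymS (fun x ξ => (m x ξ)⁻¹) q₁ ∧
        SymS (fun _ _ => 1) r ∧
        (∀ h x ξ : ℝ, q h x ξ = a h x ξ / (Complex.ofReal (e h x ξ)) + h * q₁ h x ξ) ∧
        ∀ h ∈ Set.Ioc (0:ℝ) 1, ∀ u : SchwartzMap ℝ ℂ, ∀ x : ℝ,
          Op h (a h) u x =
            Op h (fun x' ξ => Complex.ofReal (e h x' ξ)) (Op h (q h) u) x
              + (h : ℂ) ^ N * Op h (r h) u x) ∧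
      (∃ qt rt : ℝ → ℝ → ℝ → ℂ,
        SymS (fun x ξ => (m x ξ)⁻¹) qt ∧ SymS (fun _ _ => 1) rt ∧
        ∀ h ∈ Set.Ioc (0:ℝ) 1, ∀ u : SchwartzMap ℝ ℂ, ∀ x : ℝ,
          Op h (a h) u x =
            Op h (qt h) (Op h (fun x' ξ => Complex.ofReal (e h x' ξ)) u) x
              + (h : ℂ) ^ N * Op h (rt h) u x) :=
  stmt_18_general m hm hminv a ha (fun h x ξ => e h x ξ) he c hc fun h hh x ξ hax =>
    (helow h hh (x, ξ) (hsupp h hh hax)).trans (by simpa using le_abs_self (e h x ξ))
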